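/- Let $(M,\langle\,,\,\rangle)$ be a connected, complete Riemannian manifold of dimension $m\ge 2$, fix $o\in M$, write $r(x)=\mathrm{dist}(o,x)$ and $B_R=\{x\in M: r(x)<R\}$, and integrate with respect to the Riemannian volume. Let $\Omega\subseteq M$ be an open set. Let $A$ be a Carathéodory-type generalized bundle map over $\Omega$: it assigns to $x\in\Omega$, $s\in\mathbb R$, $\xi\in T_xM$ a vector $A(x,s,\xi)\in T_xM$, it is continuous in $(s,\xi)$ for a.e. $x\in\Omega$, and in every chart it is measurable in $x$ for fixed $s$ and fixed coordinates of $\xi$. Assume that $A$ is weakly-1-coercive with constant $k>0$, that is, for all $x\in\Omega$, $s\in\mathbb R$, $\xi\in T_xM$, $$\langle A(x,s,\xi),\xi\rangle\ge 0,\qquad A(x,s,0)=0,\qquad |A(x,s,\xi)|\le k,$$ and strictly monotone, that is, $\langle A(x,t,\xi)-A(x,s,\eta),\xi-\eta\rangle\ge 0$ for all $x\in\Omega$, $\xi,\eta\in T_xM$ and $t\ge s$, with strict inequality if $t>s$ and $\xi\ne\eta$. Let $w\in L^\infty_{\mathrm{loc}}(\Omega)$ with $w>0$ a.e. in $\Omega$,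 and let $L$ be the operator $Lu=w^{-1}\,\mathrm{div}(w\,A(x,u,\nabla u))$, understood weakly: $Lu\ge h$ in $\Omega$ means $$-\int_\Omega w\,\langle A(x,u,\nabla u),\nabla\varphi\rangle\ \ge\ \int_\Omega w\,h\,\varphi\qquad\text{for all } 0\le\varphi\in W^{1,1}_c(\Omega),$$ and $Lu\le h$ means the reversed inequality. Here $W^{1,1}_{\mathrm{loc}}(\Omega)$ is the space of measurable functions on $\Omega$ whose restriction to every open set $\Omega_0$ that is relatively compact in $\Omega$ lies in the completion of $C^1(\Omega_0)$ with respect to the norm $\int_{\Omega_0}(|u|+|\nabla u|)$, and $W^{1,1}_c(\Omega)$ consists of its elements that vanish outside a compact subset of $\Omega$. Let $\mu\in[0,1]$ and $\beta>0$, and let $b\in C(M)$ be positive and satisfy $$\liminf_{r(x)\to+\infty} r(x)^\mu b(x)\ge\beta\ \text{ if } 0<\mu\le 1,\qquad b\ge\beta \text{ on } M\ \text{ if } \mu=0 .$$ Let $f\in C^1(\mathbb R)$ satisfy $f(s)-f(t)\ge\alpha(s-t)$ for all $s>t$, for some $\alpha>0$. Set $$c^w_\mu(\Omega)=\liminf_{R\to+\infty}\frac{(1-\mu)\log\int_{B_R\cap\Omega}w}{R^{1-\mu}}\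 \text{ if } 0\le\mu<1,\qquad c^w_1(\Omega)=\liminf_{R\to+\infty}\frac{\log\int_{B_R\cap\Omega}w}{\log R},$$ with $\log(+\infty)=+\infty$. If $u,v\in W^{1,1}_{\mathrm{loc}}(\Omega)\cap C(\overline\Omega)$ satisfy $Lu\ge b(x)f(u)$ and $Lv\le b(x)f(v)$ weakly in $\Omega$, then $$u\ \le\ v+\max\Big\{\frac{2k}{\alpha\beta}\,c^w_\mu(\Omega),\ \sup_{\partial\Omega}(u-v)\Big\}\qquad\text{in }\Omega,$$ where $\sup_\emptyset=-\infty$ if $\partial\Omega=\emptyset$. -/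

import Mathlib

open MeasureTheory Filter Set Bundle Manifold
open scoped ContDiff Topology

noncomputable section

namespace WeakOneCoercive

/-- The model space `ℝ^m` with its Euclidean norm. -/
abbrev Euc (m : ℕ) := EuclideanSpace ℝ (Fin m)

/-- The tangent space `T_x M` of an `m`-dimensional manifold `M`. -/
abbrev Tan {m : ℕ} {M : Type*} [TopologicalSpace M] [ChartedSpace (Euc m) M] (x : M) :=
  TangentSpace 𝓘(ℝ, Euc m) x

section Geometry

variable {m : ℕ} {M : Type*} [MetricSpace M] [ChartedSpace (Euc m) M]
  [RiemannianBundle (fun x : M => TangentSpace 𝓘(ℝ, Euc m) x)]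

/-- The differential of the chart `e` at `x`, which sends a tangent vector to its coordinates. -/
def chartD (e : OpenPartialHomeomorph M (Euc m)) (x : M) (ξ : Tan (m := m) x) : Euc m :=
  mfderiv 𝓘(ℝ, Euc m) 𝓘(ℝ, Euc m) e x ξ

/-- The differential of the inverse of the chart `e` at the point `y` of its target: it sends
`a ∈ ℝ^m` to the tangent vector `∑ aᵢ ∂/∂yᵢ`. -/
def chartSymmD (e : OpenPartialHomeomorph M (Euc m)) (y : Euc m) (a : Euc m) :
    Tan (m := m) (e.symm y) :=
  mfderiv 𝓘(ℝ, Euc m) 𝓘(ℝ, Euc m) e.symm y a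

/-- The tangent vector at `x` (a point of the source of `e`) with coordinates `a` in the chart
`e`, that is, the value at `a` of the inverse of `chartD e x`. -/
def ofCoord (e : OpenPartialHomeomorph M (Euc m)) (x : M) (a : Euc m) : Tan (m := m) x :=
  (mfderiv 𝓘(ℝ, Euc m) 𝓘(ℝ, Euc m) e x).inverse a

/-- The matrix `g_{ij} = ⟨∂/∂yᵢ, ∂/∂yⱼ⟩` of the metric in the chart `e`. -/
def metricMatrix (e : OpenPartialHomeomorph M (Euc m)) (y : Euc m) : Matrix (Fin m) (Fin m) ℝ :=
  Matrix.of fun i j => inner ℝ (chartSymmD e y (EuclideanSpace.single i 1))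
    (chartSymmD e y (EuclideanSpace.single j 1))

/-- The Riemannian measure `√(det g_{ij}) dy` on the domain of the chart `e`, as a measure on `M`
that vanishes outside the domain of `e`. -/
def chartVolume [MeasurableSpace M] (e : OpenPartialHomeomorph M (Euc m)) : Measure M :=
  (((volume : Measure (Euc m)).restrict e.target).withDensity
    fun y => ENNReal.ofReal (Real.sqrt (metricMatrix e y).det)).map e.symm

/-- A smooth partition of unity subordinate to the charts of `M`. -/
def chartPartition (m : ℕ) (M : Type*) [MetricSpace M] [ChartedSpace (Euc m) M]
    [IsManifold 𝓘(ℝ, Euc m) ∞ M] [SigmaCompactSpace M] :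
    SmoothPartitionOfUnity M 𝓘(ℝ, Euc m) M univ :=
  Classical.choose
    (SmoothPartitionOfUnity.exists_isSubordinate_chartAt_source 𝓘(ℝ, Euc m) M)

/-- The Riemannian volume measure of `M`: in every chart it is `√(det g_{ij}) dy`. The local
expressions are patched together with a partition of unity, on which the result does not depend
because they agree where two charts overlap. -/
def riemVolume (m : ℕ) (M : Type*) [MetricSpace M] [ChartedSpace (Euc m) M]
    [IsManifold 𝓘(ℝ, Euc m) ∞ M] [RiemannianBundle (fun x : M => TangentSpace 𝓘(ℝ, Euc m) x)]
    [SigmaCompactSpace M] [MeasurableSpace M] : Measure M :=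
  Measure.sum fun p : M => (chartVolume (m := m) (chartAt (Euc m) p)).withDensity
    fun x => ENNReal.ofReal (chartPartition m M p x)

/-- The Riemannian gradient `∇u(x)`: the vector with `⟨∇u(x), ξ⟩ = du_x(ξ)` for all `ξ ∈ T_x M`. -/
def riemGradient (u : M → ℝ) (x : M) : Tan (m := m) x :=
  haveI : FiniteDimensional ℝ (TangentSpace 𝓘(ℝ, Euc m) x) :=
    inferInstanceAs (FiniteDimensional ℝ (Euc m))
  haveI : CompleteSpace (TangentSpace 𝓘(ℝ, Euc m) x) :=
    FiniteDimensional.complete ℝ (TangentSpace 𝓘(ℝ, Euc m) x)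
  (InnerProductSpace.toDual ℝ (TangentSpace 𝓘(ℝ, Euc m) x)).symm
    (mfderiv 𝓘(ℝ, Euc m) 𝓘(ℝ, ℝ) u x)

end Geometry

section Analysis

variable {m : ℕ} {M : Type*} [MetricSpace M] [ChartedSpace (Euc m) M]
  [IsManifold 𝓘(ℝ, Euc m) ∞ M] [RiemannianBundle (fun x : M => TangentSpace 𝓘(ℝ, Euc m) x)]
  [SigmaCompactSpace M] [MeasurableSpace M]

/-- The vector field `X` is (Lebesgue) measurable on `Ω`: so are its coordinates in every chart. -/
def MeasurableField (Ω : Set M) (X : ∀ x : M, Tan (m := m) x) : Prop :=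
  ∀ e ∈ atlas (Euc m) M,
    AEMeasurable (fun x => chartD e x (X x)) ((riemVolume m M).restrict (e.source ∩ Ω))

/-- `u ∈ W^{1,1}_loc(Ω)` with weak gradient `G`: on every open set `Ω₀` that is relatively compact
in `Ω`, the pair `(u, G)` is the limit in `L¹(Ω₀)` of pairs `(uₙ, ∇uₙ)` with `uₙ ∈ C¹(Ω₀)` of
finite `W^{1,1}(Ω₀)`-norm. In other words, `u` is in the completion of `C¹(Ω₀)` for this norm,
and `G` is the gradient of `u` in this completion. -/
structure HasWeakGradient (Ω : Set M) (u : M → ℝ) (G : ∀ x : M, Tan (m := m) x) : Prop where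
  measurable : AEMeasurable u ((riemVolume m M).restrict Ω)
  measurable_grad : MeasurableField Ω G
  approx : ∀ Ω₀ : Set M, IsOpen Ω₀ → IsCompact (closure Ω₀) → closure Ω₀ ⊆ Ω →
    ∃ U : ℕ → M → ℝ,
      (∀ n, ContMDiffOn 𝓘(ℝ, Euc m) 𝓘(ℝ, ℝ) 1 (U n) Ω₀ ∧
        ∫⁻ x in Ω₀, (‖U n x‖ₑ + ‖riemGradient (m := m) (U n) x‖ₑ) ∂(riemVolume m M) < ⊤) ∧
      Tendsto (fun n => ∫⁻ x in Ω₀,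
        (‖U n x - u x‖ₑ + ‖riemGradient (m := m) (U n) x - G x‖ₑ) ∂(riemVolume m M))
        atTop (𝓝 0)

/-- `φ ∈ W^{1,1}_c(Ω)` with `φ ≥ 0` and weak gradient `Φ`. -/
structure IsTestFunction (Ω : Set M) (φ : M → ℝ) (Φ : ∀ x : M, Tan (m := m) x) : Prop where
  weakGradient : HasWeakGradient Ω φ Φ
  compactSupport : ∃ K : Set M, IsCompact K ∧ K ⊆ Ω ∧ ∀ x, x ∉ K → φ x = 0
  nonneg : ∀ x, 0 ≤ φ x

/-- A Carathéodory-type generalized bundle map `A(x, s, ξ)` over `Ω`: continuous in `(s, ξ)` for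
almost every `x ∈ Ω`, and in every chart measurable in `x` for fixed `s` and fixed coordinates `a`
of `ξ`. -/
structure IsCaratheodory (Ω : Set M)
    (A : ∀ x : M, ℝ → Tan (m := m) x → Tan (m := m) x) : Prop where
  continuous : ∀ᵐ x ∂((riemVolume m M).restrict Ω),
    Continuous fun p : ℝ × Tan (m := m) x => A x p.1 p.2
  measurable : ∀ e ∈ atlas (Euc m) M, ∀ (s : ℝ) (a : Euc m),
    AEMeasurable (fun x => chartD e x (A x s (ofCoord e x a)))
      ((riemVolume m M).restrict (e.source ∩ Ω))

/-- `A` is weakly-1-coercive over `Ω` with coercivity constant `k`. -/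
structure IsWeaklyOneCoercive (Ω : Set M)
    (A : ∀ x : M, ℝ → Tan (m := m) x → Tan (m := m) x) (k : ℝ) : Prop where
  inner_nonneg : ∀ x ∈ Ω, ∀ (s : ℝ) (ξ : Tan (m := m) x), 0 ≤ inner ℝ (A x s ξ) ξ
  map_zero : ∀ x ∈ Ω, ∀ s : ℝ, A x s 0 = 0
  norm_le : ∀ x ∈ Ω, ∀ (s : ℝ) (ξ : Tan (m := m) x), ‖A x s ξ‖ ≤ k

/-- `A` is strictly monotone over `Ω`. -/
structure IsStrictlyMonotone (Ω : Set M)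
    (A : ∀ x : M, ℝ → Tan (m := m) x → Tan (m := m) x) : Prop where
  monotone : ∀ x ∈ Ω, ∀ (s t : ℝ) (ξ η : Tan (m := m) x), s ≤ t →
    0 ≤ inner ℝ (A x t ξ - A x s η) (ξ - η)
  strict : ∀ x ∈ Ω, ∀ (s t : ℝ) (ξ η : Tan (m := m) x), s < t → ξ ≠ η →
    0 < inner ℝ (A x t ξ - A x s η) (ξ - η)

variable (m) in
/-- `w ∈ L^∞_loc(Ω)` and `w > 0` almost everywhere in `Ω`. -/
structure IsWeight (Ω : Set M) (w : M → ℝ) : Prop where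
  measurable : AEMeasurable w ((riemVolume m M).restrict Ω)
  locallyBounded : ∀ K : Set M, IsCompact K → K ⊆ Ω →
    ∃ C : ℝ, ∀ᵐ x ∂((riemVolume m M).restrict K), |w x| ≤ C
  pos : ∀ᵐ x ∂((riemVolume m M).restrict Ω), 0 < w x

/-- `Lu ≥ h` weakly in `Ω`, where `Lu = w⁻¹ div(w A(x, u, ∇u))` and `G = ∇u`. -/
def WeakGE (Ω : Set M) (w : M → ℝ) (A : ∀ x : M, ℝ → Tan (m := m) x → Tan (m := m) x)
    (u : M → ℝ) (G : ∀ x : M, Tan (m := m) x) (h : M → ℝ) : Prop :=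
  ∀ (φ : M → ℝ) (Φ : ∀ x : M, Tan (m := m) x), IsTestFunction Ω φ Φ →
    ∫ x in Ω, w x * h x * φ x ∂(riemVolume m M) ≤
      -∫ x in Ω, w x * inner ℝ (A x (u x) (G x)) (Φ x) ∂(riemVolume m M)

/-- `Lu ≤ h` weakly in `Ω`, where `Lu = w⁻¹ div(w A(x, u, ∇u))` and `G = ∇u`. -/
def WeakLE (Ω : Set M) (w : M → ℝ) (A : ∀ x : M, ℝ → Tan (m := m) x → Tan (m := m) x)
    (u : M → ℝ) (G : ∀ x : M, Tan (m := m) x) (h : M → ℝ) : Prop :=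
  ∀ (φ : M → ℝ) (Φ : ∀ x : M, Tan (m := m) x), IsTestFunction Ω φ Φ →
    -∫ x in Ω, w x * inner ℝ (A x (u x) (G x)) (Φ x) ∂(riemVolume m M) ≤
      ∫ x in Ω, w x * h x * φ x ∂(riemVolume m M)

variable (m) in
/-- The weighted growth parameter `c^w_μ(Ω) ∈ [-∞, +∞]`:
`liminf_{R → ∞} (1-μ) log(∫_{B_R ∩ Ω} w) / R^{1-μ}` if `μ ≠ 1`, and
`liminf_{R → ∞} log(∫_{B_R ∩ Ω} w) / log R` if `μ = 1`, where `B_R = B_R(o)`.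
The integral of `w` may be `+∞`, with `log(+∞) = +∞`. -/
def weightedGrowth (o : M) (μ : ℝ) (w : M → ℝ) (Ω : Set M) : EReal :=
  if μ = 1 then
    liminf (fun R : ℝ =>
      ENNReal.log (∫⁻ x in Metric.ball o R ∩ Ω, ENNReal.ofReal (w x) ∂(riemVolume m M)) /
        ((Real.log R : ℝ) : EReal)) atTop
  else
    liminf (fun R : ℝ =>
      ((1 - μ : ℝ) : EReal) *
        ENNReal.log (∫⁻ x in Metric.ball o R ∩ Ω, ENNReal.ofReal (w x) ∂(riemVolume m M)) /
        ((R ^ (1 - μ) : ℝ) : EReal)) atTop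

end Analysis

/-- Condition (B): `b ≥ β` on `M` if `μ = 0`, and `liminf_{r(x) → ∞} r(x)^μ b(x) ≥ β` otherwise,
where `r(x) = dist(o, x)`. -/
def ConditionB {M : Type*} [MetricSpace M] (o : M) (μ β : ℝ) (b : M → ℝ) : Prop :=
  if μ = 0 then ∀ x, β ≤ b x
  else (β : EReal) ≤
    liminf (fun x : M => ((dist o x ^ μ * b x : ℝ) : EReal)) (comap (fun x => dist o x) atTop)

end WeakOneCoercive

end

namespace WeakOneCoercive

section ChartCoordinates

variable {m : ℕ} {M : Type*} [MetricSpace M] [ChartedSpace (Euc m) M]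

/-- The map `chartD e x` as a continuous linear map. -/
noncomputable def chartDL (e : OpenPartialHomeomorph M (Euc m)) (x : M) :
    Tan (m := m) x →L[ℝ] Euc m :=
  mfderiv 𝓘(ℝ, Euc m) 𝓘(ℝ, Euc m) e x

/-- The map `ofCoord e x` as a continuous linear map. -/
noncomputable def ofCoordL (e : OpenPartialHomeomorph M (Euc m)) (x : M) :
    Euc m →L[ℝ] Tan (m := m) x :=
  (mfderiv 𝓘(ℝ, Euc m) 𝓘(ℝ, Euc m) e x).inverse

lemma chartD_eq (e : OpenPartialHomeomorph M (Euc m)) (x : M) (ξ : Tan (m := m) x) :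
    chartD e x ξ = chartDL e x ξ := rfl

lemma ofCoord_eq (e : OpenPartialHomeomorph M (Euc m)) (x : M) (a : Euc m) :
    ofCoord e x a = ofCoordL e x a := rfl

variable [IsManifold 𝓘(ℝ, Euc m) ∞ M]

/-- The differential of a chart as a continuous linear equivalence. -/
lemma exists_mfderiv_chart_eq_equiv {e : OpenPartialHomeomorph M (Euc m)}
    (he : e ∈ atlas (Euc m) M) {x : M} (hx : x ∈ e.source) :
    ∃ T : Tan (m := m) x ≃L[ℝ] Euc m,
      mfderiv 𝓘(ℝ, Euc m) 𝓘(ℝ, Euc m) e x = (T : Tan (m := m) x →L[ℝ] Euc m) :=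
  ⟨(mdifferentiable_of_mem_atlas he).mfderiv hx, rfl⟩

lemma chartD_ofCoord {e : OpenPartialHomeomorph M (Euc m)}
    (he : e ∈ atlas (Euc m) M) {x : M} (hx : x ∈ e.source) (a : Euc m) :
    chartD e x (ofCoord e x a) = a := by
  obtain ⟨T, hT⟩ := exists_mfderiv_chart_eq_equiv he hx
  unfold chartD ofCoord
  rw [hT]
  erw [ContinuousLinearMap.inverse_equiv]
  exact T.apply_symm_apply a

lemma ofCoord_chartD {e : OpenPartialHomeomorph M (Euc m)}
    (he : e ∈ atlas (Euc m) M) {x : M} (hx : x ∈ e.source) (ξ : Tan (m := m) x) :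
    ofCoord e x (chartD e x ξ) = ξ := by
  obtain ⟨T, hT⟩ := exists_mfderiv_chart_eq_equiv he hx
  unfold chartD ofCoord
  rw [hT]
  erw [ContinuousLinearMap.inverse_equiv]
  exact T.symm_apply_apply ξ

lemma ofCoord_eq_mfderiv_symm {e : OpenPartialHomeomorph M (Euc m)}
    (he : e ∈ atlas (Euc m) M) {x : M} (hx : x ∈ e.source) (a : Euc m) :
    ofCoord e x a = (mfderiv 𝓘(ℝ, Euc m) 𝓘(ℝ, Euc m) e.symm (e x) a : Euc m) := by
  have h := congrArg (fun L => L (ofCoord e x a))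
    ((mdifferentiable_of_mem_atlas (I := 𝓘(ℝ, Euc m)) he).symm_comp_deriv hx)
  have h2 := chartD_ofCoord he hx a
  unfold chartD at h2
  change mfderiv 𝓘(ℝ, Euc m) 𝓘(ℝ, Euc m) e.symm (e x)
    (mfderiv 𝓘(ℝ, Euc m) 𝓘(ℝ, Euc m) e x (ofCoord e x a)) = ofCoord e x a at h
  rw [h2] at h
  exact h.symm

lemma continuousOn_ofCoord {e : OpenPartialHomeomorph M (Euc m)}
    (he : e ∈ atlas (Euc m) M) (a : Euc m) :
    ContinuousOn (fun x => (⟨x, ofCoord e x a⟩ : TangentBundle 𝓘(ℝ, Euc m) M)) e.source := by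
  have h1 : ContMDiffOn 𝓘(ℝ, Euc m) 𝓘(ℝ, Euc m) 1 e.symm e.target :=
    contMDiffOn_symm_of_mem_maximalAtlas (IsManifold.subset_maximalAtlas he)
  have h2 := h1.continuousOn_tangentMapWithin le_rfl e.open_target.uniqueMDiffOn
  have h3 : ContinuousOn (fun x : M => (⟨e x, a⟩ : TangentBundle 𝓘(ℝ, Euc m) (Euc m)))
      e.source := by
    have : Continuous (fun y : Euc m => (⟨y, a⟩ : TangentBundle 𝓘(ℝ, Euc m) (Euc m))) :=
      (tangentBundleModelSpaceHomeomorph 𝓘(ℝ, Euc m)).symm.continuous.comp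
        (continuous_id.prodMk continuous_const)
    exact this.comp_continuousOn e.continuousOn
  have h4 := h2.comp h3 (fun x hx => by simpa using e.map_source hx)
  refine h4.congr fun x hx => ?_
  have hex := e.map_source hx
  have : tangentMapWithin 𝓘(ℝ, Euc m) 𝓘(ℝ, Euc m) e.symm e.target
      (⟨e x, a⟩ : TangentBundle 𝓘(ℝ, Euc m) (Euc m)) =
      ⟨e.symm (e x), mfderiv 𝓘(ℝ, Euc m) 𝓘(ℝ, Euc m) e.symm (e x) a⟩ := by
    simp only [tangentMapWithin]
    rw [mfderivWithin_of_isOpen e.open_target hex]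
  change _ = tangentMapWithin 𝓘(ℝ, Euc m) 𝓘(ℝ, Euc m) e.symm e.target
      (⟨e x, a⟩ : TangentBundle 𝓘(ℝ, Euc m) (Euc m))
  rw [this, ofCoord_eq_mfderiv_symm he hx]
  have key : ∀ (z : M) (hz : z = x) (v : Euc m),
      (⟨x, v⟩ : TangentBundle 𝓘(ℝ, Euc m) M) = ⟨z, v⟩ := by
    rintro z rfl v; rfl
  exact key _ (e.left_inv hx) _

end ChartCoordinates

section Gram

variable {m : ℕ} {M : Type*} [MetricSpace M] [ChartedSpace (Euc m) M]
  [RiemannianBundle (fun x : M => TangentSpace 𝓘(ℝ, Euc m) x)]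

/-- The coordinate frame of the chart `e`. -/
noncomputable def coordFrame (e : OpenPartialHomeomorph M (Euc m)) (i : Fin m) (x : M) :
    Tan (m := m) x :=
  ofCoord e x (EuclideanSpace.single i 1)

/-- The Gram matrix of the coordinate frame of the chart `e`. -/
noncomputable def chartGram (e : OpenPartialHomeomorph M (Euc m)) (x : M) :
    Matrix (Fin m) (Fin m) ℝ :=
  Matrix.of fun i j => inner ℝ (coordFrame e i x) (coordFrame e j x)

lemma eq_sum_single {m : ℕ} (a : Euc m) : a = ∑ i, a i • EuclideanSpace.single i (1 : ℝ) := by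
  have h := (EuclideanSpace.basisFun (Fin m) ℝ).sum_repr a
  simpa using h.symm

variable [IsManifold 𝓘(ℝ, Euc m) ∞ M]

lemma eq_sum_coordFrame {e : OpenPartialHomeomorph M (Euc m)}
    (he : e ∈ atlas (Euc m) M) {x : M} (hx : x ∈ e.source) (ξ : Tan (m := m) x) :
    ξ = ∑ i, (chartD e x ξ) i • coordFrame e i x := by
  conv_lhs => rw [← ofCoord_chartD he hx ξ]
  set a := chartD e x ξ
  have ha : a = ∑ i, a i • EuclideanSpace.single i (1 : ℝ) := by
    exact eq_sum_single a
  conv_lhs => rw [ha]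
  simp only [coordFrame, ofCoord_eq, map_sum, map_smul]

lemma metricMatrix_eq_chartGram {e : OpenPartialHomeomorph M (Euc m)}
    (he : e ∈ atlas (Euc m) M) {y : Euc m} (hy : y ∈ e.target) :
    metricMatrix e y = chartGram e (e.symm y) := by
  have key : ∀ a : Euc m, chartSymmD e y a = ofCoord e (e.symm y) a := by
    intro a
    rw [ofCoord_eq_mfderiv_symm he (e.map_target hy), e.right_inv hy]
    rfl
  ext i j
  simp only [metricMatrix, chartGram, coordFrame, Matrix.of_apply, key]

lemma inner_eq_sum_chartGram {e : OpenPartialHomeomorph M (Euc m)}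
    (he : e ∈ atlas (Euc m) M) {x : M} (hx : x ∈ e.source) (ξ η : Tan (m := m) x) :
    inner ℝ ξ η = ∑ i, ∑ j, (chartD e x ξ) i * (chartD e x η) j * chartGram e x i j := by
  conv_lhs => rw [eq_sum_coordFrame he hx ξ, eq_sum_coordFrame he hx η]
  rw [sum_inner]
  refine Finset.sum_congr rfl fun i _ => ?_
  rw [inner_sum]
  refine Finset.sum_congr rfl fun j _ => ?_
  rw [real_inner_smul_left, real_inner_smul_right]
  simp only [chartGram, Matrix.of_apply]
  ring

lemma linearIndependent_coordFrame {e : OpenPartialHomeomorph M (Euc m)}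
    (he : e ∈ atlas (Euc m) M) {x : M} (hx : x ∈ e.source) :
    LinearIndependent ℝ (fun i => coordFrame e i x) := by
  rw [Fintype.linearIndependent_iff]
  intro g hg i
  have h1 : ofCoord e x (∑ i, g i • EuclideanSpace.single i (1 : ℝ)) = 0 := by
    rw [← hg]
    simp only [coordFrame, ofCoord_eq, map_sum, map_smul]
  have h2 := chartD_ofCoord he hx (∑ i, g i • EuclideanSpace.single i (1 : ℝ))
  rw [h1] at h2
  rw [chartD_eq, map_zero] at h2
  have h3 : WithLp.toLp 2 g = (0 : Euc m) := by
    rw [h2]; exact eq_sum_single (WithLp.toLp 2 g)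
  exact congrArg (fun v : Euc m => v i) h3

lemma posDef_chartGram {e : OpenPartialHomeomorph M (Euc m)}
    (he : e ∈ atlas (Euc m) M) {x : M} (hx : x ∈ e.source) : (chartGram e x).PosDef :=
  Matrix.posDef_gram_of_linearIndependent (𝕜 := ℝ) (linearIndependent_coordFrame he hx)

variable [IsContMDiffRiemannianBundle 𝓘(ℝ, Euc m) ∞ (Euc m)
      (fun x : M => TangentSpace 𝓘(ℝ, Euc m) x)]

instance isContinuousRiemannianBundle_tangent :
    IsContinuousRiemannianBundle (Euc m) (fun x : M => TangentSpace 𝓘(ℝ, Euc m) x) := by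
  have : IsContMDiffRiemannianBundle 𝓘(ℝ, Euc m) 0 (Euc m)
      (fun x : M => TangentSpace 𝓘(ℝ, Euc m) x) :=
    IsContMDiffRiemannianBundle.of_le (n := ∞) (by simp)
  obtain ⟨g, hg, h⟩ := this.exists_contMDiff
  exact ⟨g, hg.continuous, h⟩

lemma continuousOn_chartGram {e : OpenPartialHomeomorph M (Euc m)}
    (he : e ∈ atlas (Euc m) M) (i j : Fin m) :
    ContinuousOn (fun x => chartGram e x i j) e.source :=
  (continuousOn_ofCoord he _).inner_bundle (F := Euc m)
    (E := fun x : M => TangentSpace 𝓘(ℝ, Euc m) x) (b := id) (continuousOn_ofCoord he _)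

end Gram

section CaratheodoryComposition

lemma aemeasurable_comp_simpleFunc {α Y Z : Type*} [MeasurableSpace α] [MeasurableSpace Z]
    {ν : Measure α} {F : α → Y → Z} (hF : ∀ y, AEMeasurable (fun x => F x y) ν)
    (s : SimpleFunc α Y) : AEMeasurable (fun x => F x (s x)) ν := by
  refine ⟨fun x => (hF (s x)).mk _ x,
    s.measurable_bind (fun y x => (hF y).mk _ x) fun y => (hF y).measurable_mk, ?_⟩
  have h : ∀ᵐ x ∂ν, ∀ y ∈ s.range, F x y = (hF y).mk _ x :=
    (ae_ball_iff s.range.countable_toSet).2 fun y _ => (hF y).ae_eq_mk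
  filter_upwards [h] with x hx using hx _ (s.mem_range_self x)

/-- The composition of a Carathéodory function with a measurable function is measurable. -/
lemma aemeasurable_caratheodory_comp {α Y Z : Type*} [MeasurableSpace α]
    [TopologicalSpace Y] [TopologicalSpace.PseudoMetrizableSpace Y] [SecondCountableTopology Y]
    [MeasurableSpace Y] [BorelSpace Y]
    [TopologicalSpace Z] [TopologicalSpace.PseudoMetrizableSpace Z]
    [MeasurableSpace Z] [BorelSpace Z]
    {ν : Measure α} {F : α → Y → Z} (hF : ∀ y, AEMeasurable (fun x => F x y) ν)
    (hFc : ∀ᵐ x ∂ν, Continuous (F x)) {V : α → Y} (hV : AEMeasurable V ν) :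
    AEMeasurable (fun x => F x (V x)) ν := by
  have hV' : StronglyMeasurable (hV.mk V) := hV.measurable_mk.stronglyMeasurable
  have h1 : AEMeasurable (fun x => F x (hV.mk V x)) ν := by
    refine aemeasurable_of_tendsto_metrizable_ae atTop
      (fun n => aemeasurable_comp_simpleFunc hF (hV'.approx n)) ?_
    filter_upwards [hFc] with x hx
    exact (hx.tendsto _).comp (hV'.tendsto_approx x)
  refine h1.congr ?_
  filter_upwards [hV.ae_eq_mk] with x hx
  rw [hx]

end CaratheodoryComposition

/-- The differential of a scalar function as a linear form on the tangent space. -/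
noncomputable def scalarD {m : ℕ} {M : Type*} [MetricSpace M] [ChartedSpace (Euc m) M]
    (U : M → ℝ) (x : M) : Tan (m := m) x →L[ℝ] ℝ :=
  mfderiv 𝓘(ℝ, Euc m) 𝓘(ℝ, ℝ) U x

section ScalarDifferential

variable {m : ℕ} {M : Type*} [MetricSpace M] [ChartedSpace (Euc m) M]

lemma inner_riemGradient [RiemannianBundle (fun x : M => TangentSpace 𝓘(ℝ, Euc m) x)]
    (U : M → ℝ) (x : M) (ξ : Tan (m := m) x) :
    inner ℝ (riemGradient (m := m) U x) ξ = scalarD U x ξ := by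
  have : FiniteDimensional ℝ (TangentSpace 𝓘(ℝ, Euc m) x) :=
    inferInstanceAs (FiniteDimensional ℝ (Euc m))
  have : CompleteSpace (TangentSpace 𝓘(ℝ, Euc m) x) :=
    FiniteDimensional.complete ℝ (TangentSpace 𝓘(ℝ, Euc m) x)
  exact InnerProductSpace.toDual_symm_apply (𝕜 := ℝ) (E := TangentSpace 𝓘(ℝ, Euc m) x)
    (x := ξ) (y := mfderiv 𝓘(ℝ, Euc m) 𝓘(ℝ, ℝ) U x)

lemma continuousOn_mfderiv_coordFrame [IsManifold 𝓘(ℝ, Euc m) ∞ M] {Ω : Set M} (hΩ : IsOpen Ω)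
    {U : M → ℝ}
    (hU : ContMDiffOn 𝓘(ℝ, Euc m) 𝓘(ℝ, ℝ) 1 U Ω) {e : OpenPartialHomeomorph M (Euc m)}
    (he : e ∈ atlas (Euc m) M) (i : Fin m) :
    ContinuousOn (fun x => scalarD U x (coordFrame e i x))
      (e.source ∩ Ω) := by
  have h1 := hU.continuousOn_tangentMapWithin le_rfl hΩ.uniqueMDiffOn
  have h2 := h1.comp ((continuousOn_ofCoord he (EuclideanSpace.single i 1)).mono
    (inter_subset_left (t := Ω))) (fun x hx => by simpa using hx.2)
  have h3 := continuous_snd.comp_continuousOn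
    ((tangentBundleModelSpaceHomeomorph 𝓘(ℝ, ℝ)).continuous.comp_continuousOn h2)
  refine h3.congr fun x hx => ?_
  change _ = mfderivWithin 𝓘(ℝ, Euc m) 𝓘(ℝ, ℝ) U Ω x (coordFrame e i x)
  rw [mfderivWithin_of_isOpen hΩ hx.2]
  rfl

end ScalarDifferential

section MeasurableFields

variable {m : ℕ} {M : Type*} [MetricSpace M] [ChartedSpace (Euc m) M]
  [IsManifold 𝓘(ℝ, Euc m) ∞ M] [RiemannianBundle (fun x : M => TangentSpace 𝓘(ℝ, Euc m) x)]
  [SigmaCompactSpace M] [MeasurableSpace M] [BorelSpace M]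

lemma aemeasurable_of_chartwise {Z : Type*} [MeasurableSpace Z] {Ω : Set M} {g : M → Z}
    (h : ∀ e ∈ atlas (Euc m) M, AEMeasurable g ((riemVolume m M).restrict (e.source ∩ Ω))) :
    AEMeasurable g ((riemVolume m M).restrict Ω) := by
  have : SecondCountableTopology M := ChartedSpace.secondCountable_of_sigmaCompact (Euc m) M
  obtain ⟨s, hs, hsU⟩ := TopologicalSpace.countable_cover_nhds
    (fun x : M => (chartAt (Euc m) x).open_source.mem_nhds (mem_chart_source (Euc m) x))
  have : Countable s := hs
  have h1 : Ω = ⋃ x : s, (chartAt (Euc m) (x : M)).source ∩ Ω := by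
    rw [← iUnion_inter]
    have : ⋃ x : s, (chartAt (Euc m) (x : M)).source = univ := by
      rw [← hsU, biUnion_eq_iUnion]
    rw [this, univ_inter]
  rw [h1, aemeasurable_iUnion_iff]
  exact fun x => h _ (chart_mem_atlas _ _)

lemma ae_restrict_source_inter {Ω : Set M} (hΩ : IsOpen Ω)
    (e : OpenPartialHomeomorph M (Euc m)) :
    ∀ᵐ x ∂(riemVolume m M).restrict (e.source ∩ Ω), x ∈ e.source ∩ Ω :=
  ae_restrict_mem (e.open_source.inter hΩ).measurableSet

lemma MeasurableField.mono {Ω Ω' : Set M} (h : Ω' ⊆ Ω) {X : ∀ x : M, Tan (m := m) x}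
    (hX : MeasurableField Ω X) : MeasurableField Ω' X := fun e he =>
  (hX e he).mono_measure (Measure.restrict_mono (inter_subset_inter_right _ h) le_rfl)

lemma MeasurableField.congr {Ω : Set M} (hΩ : IsOpen Ω) {X Y : ∀ x : M, Tan (m := m) x}
    (hX : MeasurableField Ω X) (h : ∀ x ∈ Ω, X x = Y x) : MeasurableField Ω Y := fun e he => by
  refine (hX e he).congr ?_
  filter_upwards [ae_restrict_source_inter hΩ e] with x hx
  rw [h x hx.2]

lemma MeasurableField.add {Ω : Set M} {X Y : ∀ x : M, Tan (m := m) x}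
    (hX : MeasurableField Ω X) (hY : MeasurableField Ω Y) :
    MeasurableField Ω (fun x => X x + Y x) := fun e he => by
  simp only [chartD_eq, map_add]
  exact (hX e he).add (hY e he)

lemma MeasurableField.sub {Ω : Set M} {X Y : ∀ x : M, Tan (m := m) x}
    (hX : MeasurableField Ω X) (hY : MeasurableField Ω Y) :
    MeasurableField Ω (fun x => X x - Y x) := fun e he => by
  simp only [chartD_eq, map_sub]
  exact (hX e he).sub (hY e he)

lemma MeasurableField.smul {Ω : Set M} {X : ∀ x : M, Tan (m := m) x} {g : M → ℝ}
    (hg : AEMeasurable g ((riemVolume m M).restrict Ω)) (hX : MeasurableField Ω X) :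
    MeasurableField Ω (fun x => g x • X x) := fun e he => by
  have hg' := hg.mono_measure (Measure.restrict_mono (inter_subset_right (s := e.source)) le_rfl)
  simp only [chartD_eq, map_smul]
  exact hg'.smul (hX e he)

lemma MeasurableField.comp_caratheodory {Ω : Set M} (hΩ : IsOpen Ω)
    {A : ∀ x : M, ℝ → Tan (m := m) x → Tan (m := m) x} (hA : IsCaratheodory Ω A)
    {u : M → ℝ} (hu : AEMeasurable u ((riemVolume m M).restrict Ω))
    {X : ∀ x : M, Tan (m := m) x} (hX : MeasurableField Ω X) :
    MeasurableField Ω (fun x => A x (u x) (X x)) := fun e he => by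
  have hsub : (riemVolume m M).restrict (e.source ∩ Ω) ≤ (riemVolume m M).restrict Ω :=
    Measure.restrict_mono inter_subset_right le_rfl
  have h := aemeasurable_caratheodory_comp
    (F := fun x (p : ℝ × Euc m) => chartD e x (A x p.1 (ofCoord e x p.2)))
    (fun p => hA.measurable e he p.1 p.2) ?_ ((hu.mono_measure hsub).prodMk (hX e he))
  · refine h.congr ?_
    filter_upwards [ae_restrict_source_inter hΩ e] with x hx
    simp only [ofCoord_chartD he hx.1]
  · filter_upwards [ae_mono hsub hA.continuous] with x hx
    have h1 : Continuous fun p : ℝ × Euc m => (p.1, ofCoordL e x p.2) := by fun_prop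
    exact (chartDL e x).continuous.comp (hx.comp h1)

variable [IsContMDiffRiemannianBundle 𝓘(ℝ, Euc m) ∞ (Euc m)
      (fun x : M => TangentSpace 𝓘(ℝ, Euc m) x)]

lemma aemeasurable_chartGram {e : OpenPartialHomeomorph M (Euc m)}
    (he : e ∈ atlas (Euc m) M) (Ω : Set M) (i j : Fin m) :
    AEMeasurable (fun x => chartGram e x i j) ((riemVolume m M).restrict (e.source ∩ Ω)) :=
  ((continuousOn_chartGram he i j).aemeasurable e.open_source.measurableSet).mono_measure
    (Measure.restrict_mono inter_subset_left le_rfl)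

lemma aemeasurable_coord {Z : Type*} [MeasurableSpace Z] {ν : Measure Z} {a : Z → Euc m}
    (ha : AEMeasurable a ν) (i : Fin m) : AEMeasurable (fun x => a x i) ν := by
  have : Measurable (fun v : Euc m => v i) :=
    (PiLp.continuous_apply 2 (fun _ : Fin m => ℝ) i).measurable
  exact this.comp_aemeasurable ha

lemma MeasurableField.inner {Ω : Set M} (hΩ : IsOpen Ω) {X Y : ∀ x : M, Tan (m := m) x}
    (hX : MeasurableField Ω X) (hY : MeasurableField Ω Y) :
    AEMeasurable (fun x => inner ℝ (X x) (Y x)) ((riemVolume m M).restrict Ω) := by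
  refine aemeasurable_of_chartwise fun e he => ?_
  have h : AEMeasurable (fun x => ∑ i, ∑ j,
      (chartD e x (X x)) i * (chartD e x (Y x)) j * chartGram e x i j)
      ((riemVolume m M).restrict (e.source ∩ Ω)) :=
    Finset.aemeasurable_fun_sum _ fun i _ => Finset.aemeasurable_fun_sum _ fun j _ =>
      ((aemeasurable_coord (hX e he) i).mul (aemeasurable_coord (hY e he) j)).mul
        (aemeasurable_chartGram he Ω i j)
  refine h.congr ?_
  filter_upwards [ae_restrict_source_inter hΩ e] with x hx
  rw [inner_eq_sum_chartGram he hx.1]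

lemma MeasurableField.norm {Ω : Set M} (hΩ : IsOpen Ω) {X : ∀ x : M, Tan (m := m) x}
    (hX : MeasurableField Ω X) :
    AEMeasurable (fun x => ‖X x‖) ((riemVolume m M).restrict Ω) := by
  have h := (MeasurableField.inner hΩ hX hX).sqrt
  simpa only [← norm_eq_sqrt_real_inner] using h

lemma MeasurableField.enorm {Ω : Set M} (hΩ : IsOpen Ω) {X : ∀ x : M, Tan (m := m) x}
    (hX : MeasurableField Ω X) :
    AEMeasurable (fun x => ‖X x‖ₑ) ((riemVolume m M).restrict Ω) := by
  have h := (hX.norm hΩ).ennreal_ofReal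
  simpa only [ofReal_norm] using h

/-- A field is measurable as soon as its scalar products with the coordinate frames are. -/
lemma measurableField_of_inner {Ω : Set M} (hΩ : IsOpen Ω) {X : ∀ x : M, Tan (m := m) x}
    (h : ∀ e ∈ atlas (Euc m) M, ∀ i, AEMeasurable (fun x => inner ℝ (X x) (coordFrame e i x))
      ((riemVolume m M).restrict (e.source ∩ Ω))) : MeasurableField Ω X := fun e he => by
  have hG : ∀ i j, AEMeasurable (fun x => (chartGram e x)⁻¹ i j)
      ((riemVolume m M).restrict (e.source ∩ Ω)) := by
    intro i j
    have h1 : AEMeasurable (fun x i j => chartGram e x i j)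
        ((riemVolume m M).restrict (e.source ∩ Ω)) :=
      aemeasurable_pi_lambda _ fun i => aemeasurable_pi_lambda _ fun j =>
        aemeasurable_chartGram he Ω i j
    have h2 : Measurable (fun A : Fin m → Fin m → ℝ => (Matrix.of A)⁻¹ i j) := by
      have hc : Continuous (fun A : Fin m → Fin m → ℝ => Matrix.of A) := continuous_id
      simp only [Matrix.inv_def, Ring.inverse_eq_inv', Matrix.smul_apply, smul_eq_mul]
      exact hc.matrix_det.measurable.inv.mul
        (hc.matrix_adjugate.matrix_elem i j).measurable
    exact h2.comp_aemeasurable h1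
  have h3 : AEMeasurable (fun x => WithLp.toLp 2 fun i =>
      ∑ j, inner ℝ (X x) (coordFrame e j x) * (chartGram e x)⁻¹ j i)
      ((riemVolume m M).restrict (e.source ∩ Ω)) := by
    refine (PiLp.continuous_toLp 2 (fun _ : Fin m => ℝ)).measurable.comp_aemeasurable ?_
    exact aemeasurable_pi_lambda _ fun i => Finset.aemeasurable_fun_sum _ fun j _ =>
      (h e he j).mul (hG j i)
  refine h3.congr ?_
  filter_upwards [ae_restrict_source_inter hΩ e] with x hx
  ext i
  have hdet : IsUnit (chartGram e x).det := (posDef_chartGram he hx.1).det_pos.ne'.isUnit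
  have h4 : (fun j => inner ℝ (X x) (coordFrame e j x)) =
      Matrix.vecMul (chartD e x (X x)).ofLp (chartGram e x) := by
    ext j
    conv_lhs => rw [eq_sum_coordFrame he hx.1 (X x), sum_inner]
    simp only [Matrix.vecMul, dotProduct, real_inner_smul_left, chartGram, Matrix.of_apply]
  have h5 : Matrix.vecMul (fun j => inner ℝ (X x) (coordFrame e j x)) (chartGram e x)⁻¹ =
      (chartD e x (X x)).ofLp := by
    rw [h4, Matrix.vecMul_vecMul, Matrix.mul_nonsing_inv _ hdet, Matrix.vecMul_one]
  exact congrFun h5 i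

lemma measurableField_riemGradient {Ω : Set M} (hΩ : IsOpen Ω) {U : M → ℝ}
    (hU : ContMDiffOn 𝓘(ℝ, Euc m) 𝓘(ℝ, ℝ) 1 U Ω) :
    MeasurableField Ω (riemGradient (m := m) U) := by
  refine measurableField_of_inner hΩ fun e he i => ?_
  simp only [inner_riemGradient]
  exact (continuousOn_mfderiv_coordFrame hΩ hU he i).aemeasurable
    (e.open_source.inter hΩ).measurableSet

end MeasurableFields

section VolumePositivity

variable {m : ℕ} {M : Type*} [MetricSpace M] [ChartedSpace (Euc m) M]
  [IsManifold 𝓘(ℝ, Euc m) ∞ M] [RiemannianBundle (fun x : M => TangentSpace 𝓘(ℝ, Euc m) x)]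
  [IsContMDiffRiemannianBundle 𝓘(ℝ, Euc m) ∞ (Euc m)
      (fun x : M => TangentSpace 𝓘(ℝ, Euc m) x)]
  [SigmaCompactSpace M] [MeasurableSpace M] [BorelSpace M]

lemma continuousOn_det_metricMatrix {e : OpenPartialHomeomorph M (Euc m)}
    (he : e ∈ atlas (Euc m) M) :
    ContinuousOn (fun y => (metricMatrix e y).det) e.target := by
  have h1 : ContinuousOn (fun x => (chartGram e x).det) e.source := by
    simp only [Matrix.det_apply]
    exact continuousOn_finsetSum _ fun σ _ => ContinuousOn.const_smul
      (continuousOn_finsetProd _ fun i _ => continuousOn_chartGram he _ _) _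
  refine (h1.comp e.continuousOn_symm e.mapsTo_symm).congr fun y hy => ?_
  rw [metricMatrix_eq_chartGram he hy]
  rfl

lemma chartVolume_pos {e : OpenPartialHomeomorph M (Euc m)} (he : e ∈ atlas (Euc m) M)
    {V : Set M} (hV : IsOpen V) (hVe : (V ∩ e.source).Nonempty) : 0 < chartVolume e V := by
  have hsymm : AEMeasurable e.symm ((volume : Measure (Euc m)).restrict e.target) :=
    e.continuousOn_symm.aemeasurable e.open_target.measurableSet
  have hac := withDensity_absolutelyContinuous
    ((volume : Measure (Euc m)).restrict e.target)
    (fun y => ENNReal.ofReal (Real.sqrt (metricMatrix e y).det))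
  unfold chartVolume
  rw [Measure.map_apply_of_aemeasurable (hsymm.mono_ac hac) hV.measurableSet]
  have hW : IsOpen (e.target ∩ e.symm ⁻¹' V) := e.isOpen_inter_preimage_symm hV
  refine lt_of_lt_of_le ?_ (measure_mono (inter_subset_right (s := e.target)))
  rw [withDensity_apply _ hW.measurableSet, Measure.restrict_restrict hW.measurableSet,
    inter_right_comm, inter_self]
  have hm : AEMeasurable (fun y => ENNReal.ofReal (Real.sqrt (metricMatrix e y).det))
      ((volume : Measure (Euc m)).restrict (e.target ∩ e.symm ⁻¹' V)) :=
    (((continuousOn_det_metricMatrix he).mono inter_subset_left).aemeasurable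
      hW.measurableSet).sqrt.ennreal_ofReal
  rw [pos_iff_ne_zero, ne_eq, lintegral_eq_zero_iff' hm]
  intro h0
  have hfalse : ∀ᵐ y ∂(volume : Measure (Euc m)).restrict (e.target ∩ e.symm ⁻¹' V), False := by
    filter_upwards [h0, ae_restrict_mem hW.measurableSet] with y hy hyW
    have hpos : 0 < (metricMatrix e y).det := by
      rw [metricMatrix_eq_chartGram he hyW.1]
      exact (posDef_chartGram he (e.map_target hyW.1)).det_pos
    have := Real.sqrt_pos.2 hpos
    simp only [Pi.zero_apply, ENNReal.ofReal_eq_zero] at hy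
    linarith
  rw [ae_iff] at hfalse
  simp only [not_false_eq_true, ofPred_true, Measure.restrict_apply_univ] at hfalse
  obtain ⟨x, hxV, hxe⟩ := hVe
  have hne : (e.target ∩ e.symm ⁻¹' V).Nonempty :=
    ⟨e x, e.map_source hxe, by rw [mem_preimage, e.left_inv hxe]; exact hxV⟩
  exact (hW.measure_pos volume hne).ne' hfalse

lemma riemVolume_pos {V : Set M} (hV : IsOpen V) (hne : V.Nonempty) : 0 < riemVolume m M V := by
  obtain ⟨x, hx⟩ := hne
  obtain ⟨p, hp⟩ := (chartPartition m M).exists_pos_of_mem (mem_univ x)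
  have hcont : Continuous (fun y => chartPartition m M p y) :=
    (chartPartition m M p).contMDiff.continuous
  have hsub : tsupport (chartPartition m M p) ⊆ (chartAt (Euc m) p).source :=
    Classical.choose_spec
      (SmoothPartitionOfUnity.exists_isSubordinate_chartAt_source 𝓘(ℝ, Euc m) M) p
  set V' : Set M := V ∩ {y | 0 < chartPartition m M p y} with hV'
  have hV'o : IsOpen V' := hV.inter (isOpen_lt continuous_const hcont)
  have hpos := chartVolume_pos (chart_mem_atlas (Euc m) p) hV'o
    ⟨x, ⟨hx, hp⟩, hsub (subset_tsupport _ hp.ne')⟩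
  have h1 : 0 < (chartVolume (m := m) (chartAt (Euc m) p)).withDensity
      (fun x => ENNReal.ofReal (chartPartition m M p x)) V' := by
    rw [withDensity_apply _ hV'o.measurableSet, pos_iff_ne_zero, ne_eq,
      lintegral_eq_zero_iff' hcont.measurable.ennreal_ofReal.aemeasurable]
    intro h0
    have hfalse : ∀ᵐ y ∂(chartVolume (m := m) (chartAt (Euc m) p)).restrict V', False := by
      filter_upwards [h0, ae_restrict_mem hV'o.measurableSet] with y hy hyV
      simp only [Pi.zero_apply, ENNReal.ofReal_eq_zero] at hy
      exact absurd hyV.2 (not_lt.2 hy)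
    rw [ae_iff] at hfalse
    simp only [not_false_eq_true, ofPred_true, Measure.restrict_apply_univ] at hfalse
    exact hpos.ne' hfalse
  unfold riemVolume
  refine lt_of_lt_of_le h1 ?_
  refine le_trans ?_ (measure_mono (inter_subset_left (t := {y | 0 < chartPartition m M p y})))
  exact Measure.le_sum (fun p : M => (chartVolume (m := m) (chartAt (Euc m) p)).withDensity
    fun x => ENNReal.ofReal (chartPartition m M p x)) p V'

end VolumePositivity

section HopfRinow

/-- A Riemannian manifold is a length space: a point at distance less than `R + δ` from `o` is
at distance less than `δ` from a point at distance at most `R` from `o`. -/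
lemma exists_dist_le_dist_lt (m : ℕ) {M : Type*} [MetricSpace M] [ChartedSpace (Euc m) M]
    [RiemannianBundle (fun x : M => TangentSpace 𝓘(ℝ, Euc m) x)]
    [IsRiemannianManifold 𝓘(ℝ, Euc m) M] {o x : M} {R δ : ℝ} (hR : 0 ≤ R) (hδ : 0 < δ)
    (hx : dist o x < R + δ) : ∃ z, dist o z ≤ R ∧ dist z x < δ := by
  by_cases hxR : dist o x ≤ R
  · exact ⟨x, hxR, by simpa using hδ⟩
  push Not at hxR
  have h1 : riemannianEDist 𝓘(ℝ, Euc m) o x < ENNReal.ofReal (R + δ) := by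
    rw [← IsRiemannianManifold.out (I := 𝓘(ℝ, Euc m)), edist_dist]
    exact (ENNReal.ofReal_lt_ofReal_iff (by linarith)).2 hx
  obtain ⟨g, hg0, hg1, hgs, hgl⟩ := exists_lt_of_riemannianEDist_lt h1
  have hcont : ContinuousOn (fun t => dist o (g t)) (Icc (0 : ℝ) 1) :=
    (continuous_const.dist continuous_id).comp_continuousOn hgs.continuousOn
  obtain ⟨t, ht, htR⟩ : R ∈ (fun t => dist o (g t)) '' Icc (0 : ℝ) 1 :=
    intermediate_value_Icc zero_le_one hcont ⟨by simpa [hg0] using hR, by simpa [hg1] using hxR.le⟩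
  refine ⟨g t, le_of_eq htR, ?_⟩
  have h2 := riemannianEDist_le_pathELength (hgs.mono (Icc_subset_Icc_right ht.2)) hg0 rfl ht.1
  have h3 := riemannianEDist_le_pathELength (hgs.mono (Icc_subset_Icc_left ht.1)) rfl hg1 ht.2
  rw [← pathELength_add ht.1 ht.2] at hgl
  rw [← IsRiemannianManifold.out (I := 𝓘(ℝ, Euc m)), edist_dist] at h2 h3
  have h4 := (add_le_add h2 h3).trans_lt hgl
  rw [← ENNReal.ofReal_add dist_nonneg dist_nonneg,
    ENNReal.ofReal_lt_ofReal_iff (by linarith)] at h4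
  have : dist o (g t) = R := htR
  linarith

/-- Closed balls of a complete Riemannian manifold are compact. -/
lemma isCompact_closedBall_of_complete (m : ℕ) {M : Type*} [MetricSpace M]
    [ChartedSpace (Euc m) M] [RiemannianBundle (fun x : M => TangentSpace 𝓘(ℝ, Euc m) x)]
    [IsRiemannianManifold 𝓘(ℝ, Euc m) M] [CompleteSpace M] (o : M) (R : ℝ) :
    IsCompact (Metric.closedBall o R) := by
  have hloc : LocallyCompactSpace M := ChartedSpace.locallyCompactSpace (Euc m) M
  set S : Set ℝ := {R | 0 ≤ R ∧ IsCompact (Metric.closedBall o R)} with hS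
  have hmono : ∀ {R R' : ℝ}, R ≤ R' → IsCompact (Metric.closedBall o R') →
      IsCompact (Metric.closedBall o R) := fun h hc =>
    hc.of_isClosed_subset Metric.isClosed_closedBall (Metric.closedBall_subset_closedBall h)
  have h0 : (0 : ℝ) ∈ S := ⟨le_rfl, by simp⟩
  by_cases hbdd : BddAbove S
  swap
  · rw [not_bddAbove_iff] at hbdd
    obtain ⟨R', hR', hlt⟩ := hbdd R
    exact hmono hlt.le hR'.2
  exfalso
  set T := sSup S
  have hT0 : 0 ≤ T := le_csSup hbdd h0
  have hTc : IsCompact (Metric.closedBall o T) := by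
    refine TotallyBounded.isCompact_of_isClosed ?_ Metric.isClosed_closedBall
    rw [Metric.totallyBounded_iff]
    intro ε hε
    rcases eq_or_lt_of_le hT0 with hTz | hTpos
    · rw [← hTz]
      exact Metric.totallyBounded_iff.1 h0.2.totallyBounded ε hε
    obtain ⟨R', hR'S, hR'⟩ := exists_lt_of_lt_csSup ⟨0, h0⟩ (show T - ε / 2 < T by linarith)
    obtain ⟨t, htf, ht⟩ := Metric.totallyBounded_iff.1 hR'S.2.totallyBounded (ε / 2) (half_pos hε)
    refine ⟨t, htf, fun x hx => ?_⟩
    rw [Metric.mem_closedBall, dist_comm] at hx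
    obtain ⟨z, hz1, hz2⟩ := exists_dist_le_dist_lt m (o := o) (x := x) (R := R') (δ := ε / 2)
      hR'S.1 (half_pos hε) (by linarith)
    have hz := ht (show z ∈ Metric.closedBall o R' by rwa [Metric.mem_closedBall, dist_comm])
    simp only [mem_iUnion, Metric.mem_ball, exists_prop] at hz ⊢
    obtain ⟨y, hy, hzy⟩ := hz
    refine ⟨y, hy, ?_⟩
    have := dist_triangle x z y
    rw [dist_comm x z] at this
    linarith
  obtain ⟨δ, hδ, hδc⟩ := hTc.exists_isCompact_cthickening
  have hmem : T + δ / 2 ∈ S := by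
    refine ⟨by linarith, hδc.of_isClosed_subset Metric.isClosed_closedBall fun x hx => ?_⟩
    rw [Metric.mem_closedBall, dist_comm] at hx
    obtain ⟨z, hz1, hz2⟩ := exists_dist_le_dist_lt m (o := o) (x := x) (R := T) (δ := δ)
      hT0 hδ (by linarith)
    exact Metric.mem_cthickening_of_dist_le x z δ _ (by rwa [Metric.mem_closedBall, dist_comm])
      (by rw [dist_comm]; exact hz2.le)
  have := le_csSup hbdd hmem
  linarith

end HopfRinow

section Mollification

open scoped Convolution NNReal in
/-- A Lipschitz function is a uniform limit of smooth functions with the same constant. -/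
lemma exists_contDiff_lipschitzWith_dist_le {E : Type*} [NormedAddCommGroup E] [NormedSpace ℝ E]
    [FiniteDimensional ℝ E] {K : ℝ≥0} {F : E → ℝ} (hF : LipschitzWith K F) {δ : ℝ}
    (hδ : 0 < δ) :
    ∃ G : E → ℝ, ContDiff ℝ ∞ G ∧ LipschitzWith K G ∧ ∀ x, |G x - F x| ≤ δ := by
  borelize E
  have hε : 0 < δ / (K + 1) := by positivity
  set φ : ContDiffBump (0 : E) :=
    ⟨δ / (K + 1) / 2, δ / (K + 1), half_pos hε, half_lt_self hε⟩ with hφ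
  set ν : Measure E := Measure.addHaar
  have hint : ∀ x, Integrable (fun t => φ.normed ν t • F (x - t)) ν := fun x =>
    ((φ.continuous_normed.smul
      (hF.continuous.comp (continuous_const.sub continuous_id))).integrable_of_hasCompactSupport
        φ.hasCompactSupport_normed.smul_right)
  refine ⟨φ.normed ν ⋆[ContinuousLinearMap.lsmul ℝ ℝ, ν] F, ?_, ?_, ?_⟩
  · exact φ.hasCompactSupport_normed.contDiff_convolution_left _ φ.contDiff_normed
      hF.continuous.locallyIntegrable
  · refine LipschitzWith.of_dist_le_mul fun x y => ?_
    rw [Real.dist_eq, convolution_lsmul, convolution_lsmul, ← integral_sub (hint x) (hint y)]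
    have h1 : ∀ t, ‖φ.normed ν t • F (x - t) - φ.normed ν t • F (y - t)‖ ≤
        φ.normed ν t * (K * dist x y) := by
      intro t
      rw [← smul_sub, norm_smul, Real.norm_of_nonneg (φ.nonneg_normed t)]
      refine mul_le_mul_of_nonneg_left ?_ (φ.nonneg_normed t)
      have := hF.dist_le_mul (x - t) (y - t)
      rwa [dist_sub_right, dist_eq_norm] at this
    refine (norm_integral_le_of_norm_le (φ.integrable_normed.mul_const _)
      (Eventually.of_forall h1)).trans_eq ?_
    rw [integral_mul_const, φ.integral_normed, one_mul]
  · intro x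
    rw [← Real.dist_eq]
    refine φ.dist_normed_convolution_le hF.continuous.aestronglyMeasurable fun y hy => ?_
    have h1 := hF.dist_le_mul y x
    have h2 : dist y x < δ / (K + 1) := hy
    have hK : (0 : ℝ) ≤ K := K.2
    rw [lt_div_iff₀ (by positivity)] at h2
    nlinarith [dist_nonneg (x := y) (y := x)]

end Mollification

section LocalComparison

variable {m : ℕ} {M : Type*} [MetricSpace M] [ChartedSpace (Euc m) M]
  [IsManifold 𝓘(ℝ, Euc m) ∞ M]

lemma continuousLinearMapAt_eq_chartDL (p : M) {x : M} (hx : x ∈ (chartAt (Euc m) p).source)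
    (ξ : Tan (m := m) x) :
    (trivializationAt (Euc m) (TangentSpace 𝓘(ℝ, Euc m)) p).continuousLinearMapAt ℝ x ξ =
      chartDL (chartAt (Euc m) p) x ξ := by
  rw [TangentBundle.continuousLinearMapAt_trivializationAt hx]
  rfl

lemma symmL_eq_ofCoordL (p : M) {x : M} (hx : x ∈ (chartAt (Euc m) p).source) (a : Euc m) :
    (trivializationAt (Euc m) (TangentSpace 𝓘(ℝ, Euc m)) p).symmL ℝ x a =
      ofCoordL (chartAt (Euc m) p) x a := by
  have hb : x ∈ (trivializationAt (Euc m) (TangentSpace 𝓘(ℝ, Euc m)) p).baseSet := by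
    simpa using hx
  have h1 := Trivialization.symmL_continuousLinearMapAt (R := ℝ)
    (trivializationAt (Euc m) (TangentSpace 𝓘(ℝ, Euc m)) p) hb
    (ofCoordL (chartAt (Euc m) p) x a)
  rw [continuousLinearMapAt_eq_chartDL p hx] at h1
  have h2 := chartD_ofCoord (chart_mem_atlas (Euc m) p) hx a
  rw [chartD_eq, ofCoord_eq] at h2
  rwa [h2] at h1

lemma chartSymmD_eq_ofCoord {e : OpenPartialHomeomorph M (Euc m)}
    (he : e ∈ atlas (Euc m) M) {y : Euc m} (hy : y ∈ e.target) (a : Euc m) :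
    chartSymmD e y a = ofCoord e (e.symm y) a := by
  rw [ofCoord_eq_mfderiv_symm he (e.map_target hy), e.right_inv hy]
  rfl

variable [RiemannianBundle (fun x : M => TangentSpace 𝓘(ℝ, Euc m) x)]
  [IsContMDiffRiemannianBundle 𝓘(ℝ, Euc m) ∞ (Euc m)
      (fun x : M => TangentSpace 𝓘(ℝ, Euc m) x)]

/-- Near `p`, the coordinates of the chart at `p` distort the metric by a factor close to `1`. -/
lemma eventually_norm_comparison (p : M) {η : ℝ} (hη : 1 < η) :
    ∀ᶠ x in 𝓝 p, x ∈ (chartAt (Euc m) p).source ∧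
      (∀ ξ : Tan (m := m) x, ‖ofCoordL (chartAt (Euc m) p) p
        (chartDL (chartAt (Euc m) p) x ξ)‖ ≤ η * ‖ξ‖) ∧
      (∀ a : Euc m, ‖ofCoordL (chartAt (Euc m) p) x a‖ ≤
        η * ‖ofCoordL (chartAt (Euc m) p) p a‖) := by
  have hp := mem_chart_source (Euc m) p
  filter_upwards [(chartAt (Euc m) p).open_source.mem_nhds hp,
    eventually_norm_symmL_trivializationAt_self_comp_lt (Euc m)
      (fun x : M => TangentSpace 𝓘(ℝ, Euc m) x) p hη,
    eventually_norm_symmL_trivializationAt_comp_self_lt (Euc m)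
      (fun x : M => TangentSpace 𝓘(ℝ, Euc m) x) p hη] with x hx h1 h2
  refine ⟨hx, fun ξ => ?_, fun a => ?_⟩
  · have h3 := ContinuousLinearMap.le_of_opNorm_le _ h1.le ξ
    rw [ContinuousLinearMap.comp_apply, continuousLinearMapAt_eq_chartDL p hx,
      symmL_eq_ofCoordL p hp] at h3
    exact h3
  · have h3 := ContinuousLinearMap.le_of_opNorm_le _ h2.le (ofCoordL (chartAt (Euc m) p) p a)
    rw [ContinuousLinearMap.comp_apply, continuousLinearMapAt_eq_chartDL p hp,
      symmL_eq_ofCoordL p hx] at h3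
    have h4 := chartD_ofCoord (chart_mem_atlas (Euc m) p) hp a
    rw [chartD_eq, ofCoord_eq] at h4
    rwa [h4] at h3

variable [IsRiemannianManifold 𝓘(ℝ, Euc m) M]

/-- The distance of two points in a convex part of a chart is bounded by the coordinate norm. -/
lemma dist_symm_le_of_convex {e : OpenPartialHomeomorph M (Euc m)}
    (he : e ∈ atlas (Euc m) M) {B : Set (Euc m)} (hB : Convex ℝ B) (hBe : B ⊆ e.target)
    {N : Euc m → ℝ} (hN : ∀ y ∈ B, ∀ a, ‖ofCoordL e (e.symm y) a‖ ≤ N a)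
    {y y' : Euc m} (hy : y ∈ B) (hy' : y' ∈ B) : dist (e.symm y) (e.symm y') ≤ N (y' - y) := by
  have hN0 : 0 ≤ N (y' - y) := (norm_nonneg _).trans (hN y hy _)
  rw [← ENNReal.ofReal_le_ofReal_iff hN0, ← edist_dist,
    IsRiemannianManifold.out (I := 𝓘(ℝ, Euc m))]
  let ℓ : ℝ →ᴬ[ℝ] Euc m := ContinuousAffineMap.lineMap (R := ℝ) y y'
  have hℓ : ∀ t ∈ Icc (0 : ℝ) 1, ℓ t ∈ B := by
    intro t ht
    have : AffineMap.lineMap y y' t ∈ B := hB.lineMap_mem hy hy' ht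
    simpa [ℓ, ContinuousAffineMap.coe_lineMap_eq] using this
  have hsm : ContMDiffOn 𝓘(ℝ, ℝ) 𝓘(ℝ, Euc m) 1 ℓ (Icc 0 1) :=
    (contMDiff_iff_contDiff.2 (ContinuousAffineMap.contDiff _)).contMDiffOn
  have hes : ContMDiffOn 𝓘(ℝ, Euc m) 𝓘(ℝ, Euc m) 1 e.symm e.target :=
    contMDiffOn_symm_of_mem_maximalAtlas (IsManifold.subset_maximalAtlas he)
  refine (riemannianEDist_le_pathELength (γ := e.symm ∘ ℓ) (a := 0) (b := 1)
    (hes.comp hsm fun t ht => hBe (hℓ t ht)) ?_ ?_ zero_le_one).trans ?_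
  · simp [ℓ, ContinuousAffineMap.coe_lineMap_eq]
  · simp [ℓ, ContinuousAffineMap.coe_lineMap_eq]
  rw [pathELength_eq_lintegral_mfderiv_Icc]
  have hbound : ∀ t ∈ Icc (0 : ℝ) 1,
      ‖mfderiv 𝓘(ℝ, ℝ) 𝓘(ℝ, Euc m) (e.symm ∘ ℓ) t 1‖ₑ ≤ ENNReal.ofReal (N (y' - y)) := by
    intro t ht
    have h1 : MDifferentiableAt 𝓘(ℝ, Euc m) 𝓘(ℝ, Euc m) e.symm (ℓ t) :=
      mdifferentiableAt_atlas_symm he (hBe (hℓ t ht))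
    have h2 : MDifferentiableAt 𝓘(ℝ, ℝ) 𝓘(ℝ, Euc m) ℓ t :=
      (ContinuousAffineMap.differentiableAt _).mdifferentiableAt
    have h3 : mfderiv 𝓘(ℝ, ℝ) 𝓘(ℝ, Euc m) (e.symm ∘ ℓ) t 1 = chartSymmD e (ℓ t) (y' - y) := by
      rw [mfderiv_comp t h1 h2]
      have : mfderiv 𝓘(ℝ, ℝ) 𝓘(ℝ, Euc m) ℓ t 1 = (y' - y : Euc m) := by
        have h : fderiv ℝ ℓ t 1 = y' - y := by simp [ℓ]
        rw [mfderiv_eq_fderiv]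
        exact h
      change mfderiv 𝓘(ℝ, Euc m) 𝓘(ℝ, Euc m) e.symm (ℓ t)
        (mfderiv 𝓘(ℝ, ℝ) 𝓘(ℝ, Euc m) ℓ t 1) = _
      rw [this]
      rfl
    rw [h3, chartSymmD_eq_ofCoord he (hBe (hℓ t ht)), ← ofReal_norm]
    exact ENNReal.ofReal_le_ofReal (hN _ (hℓ t ht) _)
  refine (setLIntegral_mono' measurableSet_Icc hbound).trans_eq ?_
  simp

end LocalComparison

section GradientCalculus

variable {m : ℕ} {M : Type*} [MetricSpace M] [ChartedSpace (Euc m) M]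
  [RiemannianBundle (fun x : M => TangentSpace 𝓘(ℝ, Euc m) x)]

lemma riemGradient_eq_of_inner {U : M → ℝ} {x : M} {X : Tan (m := m) x}
    (h : ∀ ξ : Tan (m := m) x, scalarD U x ξ = inner ℝ X ξ) :
    riemGradient (m := m) U x = X :=
  ext_inner_right ℝ fun ξ => by rw [inner_riemGradient]; exact h ξ

lemma norm_riemGradient_le {U : M → ℝ} {x : M} {C : ℝ} (hC : 0 ≤ C)
    (h : ∀ ξ : Tan (m := m) x, scalarD U x ξ ≤ C * ‖ξ‖) :
    ‖riemGradient (m := m) U x‖ ≤ C := by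
  have h1 := h (riemGradient (m := m) U x)
  have h2 : scalarD U x (riemGradient (m := m) U x) =
      ‖riemGradient (m := m) U x‖ ^ 2 := by
    rw [← real_inner_self_eq_norm_sq]
    exact (inner_riemGradient U x _).symm
  rw [h2, sq] at h1
  by_contra hlt
  push Not at hlt
  have hpos : 0 < ‖riemGradient (m := m) U x‖ := hC.trans_lt hlt
  exact absurd (le_of_mul_le_mul_right h1 hpos) (not_le.2 hlt)

lemma riemGradient_congr {U V : M → ℝ} {x : M} (h : U =ᶠ[𝓝 x] V) :
    riemGradient (m := m) U x = riemGradient (m := m) V x := by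
  unfold riemGradient
  rw [h.mfderiv_eq]

lemma riemGradient_comp {U : M → ℝ} {x : M} {h : ℝ → ℝ} {h' : ℝ}
    (hU : MDifferentiableAt 𝓘(ℝ, Euc m) 𝓘(ℝ, ℝ) U x) (hh : HasDerivAt h h' (U x)) :
    riemGradient (m := m) (fun y => h (U y)) x = h' • riemGradient (m := m) U x := by
  refine riemGradient_eq_of_inner fun ξ => ?_
  have h1 : HasMFDerivAt 𝓘(ℝ, Euc m) 𝓘(ℝ, ℝ) (h ∘ U) x _ :=
    HasMFDerivAt.comp x hh.hasFDerivAt.hasMFDerivAt hU.hasMFDerivAt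
  have h2 : mfderiv 𝓘(ℝ, Euc m) 𝓘(ℝ, ℝ) (fun y => h (U y)) x = _ := h1.mfderiv
  unfold scalarD
  rw [h2, real_inner_smul_left, inner_riemGradient]
  change scalarD U x ξ * h' = h' * _
  ring

lemma riemGradient_add {U V : M → ℝ} {x : M}
    (hU : MDifferentiableAt 𝓘(ℝ, Euc m) 𝓘(ℝ, ℝ) U x)
    (hV : MDifferentiableAt 𝓘(ℝ, Euc m) 𝓘(ℝ, ℝ) V x) :
    riemGradient (m := m) (fun y => U y + V y) x =
      riemGradient (m := m) U x + riemGradient (m := m) V x := by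
  refine riemGradient_eq_of_inner fun ξ => ?_
  have h2 : mfderiv 𝓘(ℝ, Euc m) 𝓘(ℝ, ℝ) (fun y => U y + V y) x = _ :=
    (hU.hasMFDerivAt.add hV.hasMFDerivAt).mfderiv
  unfold scalarD
  rw [h2, inner_add_left, inner_riemGradient, inner_riemGradient]
  rfl

lemma riemGradient_sub {U V : M → ℝ} {x : M}
    (hU : MDifferentiableAt 𝓘(ℝ, Euc m) 𝓘(ℝ, ℝ) U x)
    (hV : MDifferentiableAt 𝓘(ℝ, Euc m) 𝓘(ℝ, ℝ) V x) :
    riemGradient (m := m) (fun y => U y - V y) x =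
      riemGradient (m := m) U x - riemGradient (m := m) V x := by
  refine riemGradient_eq_of_inner fun ξ => ?_
  have h2 : mfderiv 𝓘(ℝ, Euc m) 𝓘(ℝ, ℝ) (fun y => U y - V y) x = _ :=
    (hU.hasMFDerivAt.sub hV.hasMFDerivAt).mfderiv
  unfold scalarD
  rw [h2, inner_sub_left, inner_riemGradient, inner_riemGradient]
  rfl

lemma riemGradient_mul {U V : M → ℝ} {x : M}
    (hU : MDifferentiableAt 𝓘(ℝ, Euc m) 𝓘(ℝ, ℝ) U x)
    (hV : MDifferentiableAt 𝓘(ℝ, Euc m) 𝓘(ℝ, ℝ) V x) :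
    riemGradient (m := m) (fun y => U y * V y) x =
      U x • riemGradient (m := m) V x + V x • riemGradient (m := m) U x := by
  refine riemGradient_eq_of_inner fun ξ => ?_
  have h2 : mfderiv 𝓘(ℝ, Euc m) 𝓘(ℝ, ℝ) (fun y => U y * V y) x = _ :=
    (hU.hasMFDerivAt.mul hV.hasMFDerivAt).mfderiv
  unfold scalarD
  rw [h2, inner_add_left, real_inner_smul_left, real_inner_smul_left, inner_riemGradient,
    inner_riemGradient]
  rfl

end GradientCalculus

section LocalSmoothing

variable {m : ℕ} {M : Type*} [MetricSpace M] [ChartedSpace (Euc m) M]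
  [IsManifold 𝓘(ℝ, Euc m) ∞ M]
  [RiemannianBundle (fun x : M => TangentSpace 𝓘(ℝ, Euc m) x)]
  [IsContMDiffRiemannianBundle 𝓘(ℝ, Euc m) ∞ (Euc m)
      (fun x : M => TangentSpace 𝓘(ℝ, Euc m) x)]
  [IsRiemannianManifold 𝓘(ℝ, Euc m) M]

/-- Around each point, a `1`-Lipschitz function is a uniform limit of smooth functions whose
gradient is bounded by a constant close to `1`. -/
lemma exists_local_smooth_approx {r : M → ℝ} (hr : LipschitzWith 1 r) (p : M) {η : ℝ}
    (hη : 1 < η) :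
    ∃ U : Set M, IsOpen U ∧ p ∈ U ∧ ∀ δ > 0, ∃ ρ : M → ℝ,
      ContMDiffOn 𝓘(ℝ, Euc m) 𝓘(ℝ, ℝ) ∞ ρ U ∧
      ∀ x ∈ U, |ρ x - r x| ≤ δ ∧ ‖riemGradient (m := m) ρ x‖ ≤ η * η := by
  set e := chartAt (Euc m) p with he_def
  have he : e ∈ atlas (Euc m) M := chart_mem_atlas (Euc m) p
  have hp : p ∈ e.source := mem_chart_source (Euc m) p
  have hη0 : 0 ≤ η := by linarith
  have hgood := eventually_norm_comparison (m := m) p hη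
  have hgood' : ∀ᶠ y in 𝓝 (e p), y ∈ e.target ∧ (∀ ξ : Tan (m := m) (e.symm y),
      ‖ofCoordL e p (chartDL e (e.symm y) ξ)‖ ≤ η * ‖ξ‖) ∧
      (∀ a : Euc m, ‖ofCoordL e (e.symm y) a‖ ≤ η * ‖ofCoordL e p a‖) := by
    have ht : Tendsto e.symm (𝓝 (e p)) (𝓝 p) := by
      have := e.continuousAt_symm (e.map_source hp)
      rwa [ContinuousAt, e.left_inv hp] at this
    filter_upwards [ht.eventually hgood, e.open_target.mem_nhds (e.map_source hp)]
      with y hy hy' using ⟨hy', hy.2⟩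
  obtain ⟨s, hs, hsB⟩ := Metric.eventually_nhds_iff_ball.1 hgood'
  set B := Metric.ball (e p) s with hB
  refine ⟨e.source ∩ e ⁻¹' B, e.isOpen_inter_preimage Metric.isOpen_ball,
    ⟨hp, Metric.mem_ball_self hs⟩, fun δ hδ => ?_⟩
  obtain ⟨T, hT⟩ := exists_mfderiv_chart_eq_equiv he hp
  have hTsymm : ∀ a, ofCoordL e p a = T.symm a := by
    intro a
    have h1 := chartD_ofCoord he hp a
    unfold chartD at h1
    rw [hT] at h1
    rw [← ofCoord_eq, ← h1]
    conv_lhs => rw [h1]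
    exact (T.symm_apply_apply (ofCoord e p a)).symm
  have : FiniteDimensional ℝ (Tan (m := m) p) := inferInstanceAs (FiniteDimensional ℝ (Euc m))
  have hlip : LipschitzOnWith η.toNNReal (fun ζ : Tan (m := m) p => r (e.symm (T ζ)))
      (T ⁻¹' B) := by
    refine LipschitzOnWith.of_dist_le_mul fun ζ hζ ζ' hζ' => ?_
    rw [Real.coe_toNNReal _ hη0]
    have h1 := dist_symm_le_of_convex he (convex_ball (e p) s) (fun y hy => (hsB y hy).1)
      (N := fun a => η * ‖ofCoordL e p a‖) (fun y hy => (hsB y hy).2.2) hζ' hζ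
    have h2 := hr.dist_le_mul (e.symm (T ζ)) (e.symm (T ζ'))
    rw [hTsymm, map_sub, T.symm_apply_apply, T.symm_apply_apply, ← dist_eq_norm] at h1
    rw [NNReal.coe_one, one_mul, dist_comm (e.symm (T ζ))] at h2
    exact h2.trans h1
  obtain ⟨F, hF, hFeq⟩ := hlip.extend_real
  obtain ⟨G, hGs, hGl, hGd⟩ := exists_contDiff_lipschitzWith_dist_le hF hδ
  refine ⟨fun x => G (T.symm (e x)), ?_, fun x hx => ⟨?_, ?_⟩⟩
  · have h1 : ContMDiffOn 𝓘(ℝ, Euc m) 𝓘(ℝ, Euc m) ∞ e e.source :=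
      contMDiffOn_of_mem_maximalAtlas (IsManifold.subset_maximalAtlas he)
    have h2 : ContDiff ℝ ∞ (fun y : Euc m => G (T.symm y)) := hGs.comp T.symm.contDiff
    exact (h2.contMDiff.comp_contMDiffOn (h1.mono inter_subset_left))
  · have h1 := hGd (T.symm (e x))
    have h2 := hFeq (show T.symm (e x) ∈ T ⁻¹' B by
      rw [mem_preimage, T.apply_symm_apply]; exact hx.2)
    simp only [T.apply_symm_apply, e.left_inv hx.1] at h2
    rwa [← h2] at h1
  · refine norm_riemGradient_le (mul_nonneg hη0 hη0) fun ξ => ?_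
    have h1 : HasMFDerivAt 𝓘(ℝ, Euc m) 𝓘(ℝ, Euc m) e x _ :=
      (mdifferentiableAt_atlas he hx.1).hasMFDerivAt
    have h2 : HasFDerivAt (fun y : Euc m => G (T.symm y)) _ (e x) :=
      HasFDerivAt.comp (e x) (hGs.differentiable (by simp) (T.symm (e x))).hasFDerivAt
        T.symm.hasFDerivAt
    have h3 : HasMFDerivAt 𝓘(ℝ, Euc m) 𝓘(ℝ, ℝ) ((fun y : Euc m => G (T.symm y)) ∘ e) x _ :=
      HasMFDerivAt.comp x h2.hasMFDerivAt h1
    have h3' : mfderiv 𝓘(ℝ, Euc m) 𝓘(ℝ, ℝ) (fun x => G (T.symm (e x))) x = _ := h3.mfderiv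
    unfold scalarD
    rw [h3']
    have h4 := (hsB (e x) hx.2).2.1
    rw [e.left_inv hx.1] at h4
    have h5 := ContinuousLinearMap.le_of_opNorm_le _ (norm_fderiv_le_of_lipschitz ℝ hGl
      (x₀ := T.symm (e x))) (T.symm (chartDL e x ξ))
    rw [Real.coe_toNNReal _ hη0] at h5
    have h6 := h4 ξ
    rw [hTsymm] at h6
    calc _ ≤ ‖fderiv ℝ G (T.symm (e x)) (T.symm (chartDL e x ξ))‖ := Real.le_norm_self _
      _ ≤ η * ‖T.symm (chartDL e x ξ)‖ := h5
      _ ≤ η * (η * ‖ξ‖) := mul_le_mul_of_nonneg_left h6 hη0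
      _ = η * η * ‖ξ‖ := by ring

end LocalSmoothing

section GradientSums

variable {m : ℕ} {M : Type*} [MetricSpace M] [ChartedSpace (Euc m) M]
  [RiemannianBundle (fun x : M => TangentSpace 𝓘(ℝ, Euc m) x)]

lemma riemGradient_const (c : ℝ) (x : M) : riemGradient (m := m) (fun _ : M => c) x = 0 := by
  refine riemGradient_eq_of_inner fun ξ => ?_
  unfold scalarD
  rw [mfderiv_const, inner_zero_left]
  rfl

lemma riemGradient_sum {ι : Type*} {U : ι → M → ℝ} {x : M} (s : Finset ι)
    (hU : ∀ i ∈ s, MDifferentiableAt 𝓘(ℝ, Euc m) 𝓘(ℝ, ℝ) (U i) x) :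
    MDifferentiableAt 𝓘(ℝ, Euc m) 𝓘(ℝ, ℝ) (fun y => ∑ i ∈ s, U i y) x ∧
    riemGradient (m := m) (fun y => ∑ i ∈ s, U i y) x =
      ∑ i ∈ s, riemGradient (m := m) (U i) x := by
  classical
  induction s using Finset.induction_on with
  | empty => exact ⟨by simpa using mdifferentiableAt_const, by simpa using riemGradient_const 0 x⟩
  | insert i s hi ih =>
    obtain ⟨h1, h2⟩ := ih fun j hj => hU j (Finset.mem_insert_of_mem hj)
    have h3 := hU i (Finset.mem_insert_self i s)
    simp only [Finset.sum_insert hi]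
    exact ⟨h3.add h1, by rw [riemGradient_add h3 h1, h2]⟩

variable [IsManifold 𝓘(ℝ, Euc m) ∞ M]
  [IsContMDiffRiemannianBundle 𝓘(ℝ, Euc m) ∞ (Euc m)
      (fun x : M => TangentSpace 𝓘(ℝ, Euc m) x)]

/-- The gradient of a `C¹` function is locally bounded. -/
lemma eventually_norm_riemGradient_le {U : M → ℝ}
    (hU : ContMDiff 𝓘(ℝ, Euc m) 𝓘(ℝ, ℝ) 1 U) (p : M) :
    ∃ C : ℝ, ∀ᶠ x in 𝓝 p, ‖riemGradient (m := m) U x‖ ≤ C := by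
  set e := chartAt (Euc m) p with he_def
  have he : e ∈ atlas (Euc m) M := chart_mem_atlas (Euc m) p
  have hp : p ∈ e.source := mem_chart_source (Euc m) p
  obtain ⟨C, hC0, hC⟩ := eventually_norm_trivializationAt_lt (Euc m)
    (fun x : M => TangentSpace 𝓘(ℝ, Euc m) x) p
  have hcont : ∀ i, ContinuousAt (fun x => scalarD U x (coordFrame e i x)) p := fun i => by
    have := continuousOn_mfderiv_coordFrame isOpen_univ hU.contMDiffOn he i
    rw [inter_univ] at this
    exact this.continuousAt (e.open_source.mem_nhds hp)
  have hb : ∀ i, ∀ᶠ x in 𝓝 p, |scalarD U x (coordFrame e i x)| <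
      |scalarD U p (coordFrame e i p)| + 1 := fun i =>
    (hcont i).abs.eventually_lt_const (by linarith)
  refine ⟨C * ∑ i, (|scalarD U p (coordFrame e i p)| + 1), ?_⟩
  filter_upwards [hC, e.open_source.mem_nhds hp, eventually_all.2 hb] with x hx hxe hxb
  refine norm_riemGradient_le (by positivity) fun ξ => ?_
  have h1 : ∀ i, |(chartD e x ξ) i| ≤ C * ‖ξ‖ := fun i => by
    have h2 := ContinuousLinearMap.le_of_opNorm_le _ hx.le ξ
    rw [continuousLinearMapAt_eq_chartDL p hxe] at h2
    exact (PiLp.norm_apply_le (chartDL e x ξ) i).trans h2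
  conv_lhs => rw [eq_sum_coordFrame he hxe ξ]
  rw [map_sum, Finset.mul_sum, Finset.sum_mul]
  refine Finset.sum_le_sum fun i _ => ?_
  rw [map_smul, smul_eq_mul]
  calc (chartD e x ξ) i * scalarD U x (coordFrame e i x)
      ≤ |(chartD e x ξ) i| * |scalarD U x (coordFrame e i x)| := by
        rw [← abs_mul]; exact le_abs_self _
    _ ≤ (C * ‖ξ‖) * (|scalarD U p (coordFrame e i p)| + 1) :=
        mul_le_mul (h1 i) (hxb i).le (abs_nonneg _) (by positivity)
    _ = _ := by ring

lemma exists_norm_riemGradient_le_of_isCompact {U : M → ℝ}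
    (hU : ContMDiff 𝓘(ℝ, Euc m) 𝓘(ℝ, ℝ) 1 U) {K : Set M} (hK : IsCompact K) :
    ∃ C : ℝ, ∀ x ∈ K, ‖riemGradient (m := m) U x‖ ≤ C := by
  refine hK.induction_on (p := fun s => ∃ C : ℝ, ∀ x ∈ s, ‖riemGradient (m := m) U x‖ ≤ C)
    ⟨0, by simp⟩ (fun s t hst ⟨C, hC⟩ => ⟨C, fun x hx => hC x (hst hx)⟩) ?_ ?_
  · rintro s t ⟨C, hC⟩ ⟨D, hD⟩
    refine ⟨max C D, fun x hx => ?_⟩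
    rcases hx with hx | hx
    · exact (hC x hx).trans (le_max_left _ _)
    · exact (hD x hx).trans (le_max_right _ _)
  · intro x _
    obtain ⟨C, hC⟩ := eventually_norm_riemGradient_le hU x
    exact ⟨_, mem_nhdsWithin_of_mem_nhds hC, C, fun y hy => hy⟩

end GradientSums

section GlobalSmoothing

variable {m : ℕ} {M : Type*} [MetricSpace M] [ChartedSpace (Euc m) M]
  [IsManifold 𝓘(ℝ, Euc m) ∞ M]
  [RiemannianBundle (fun x : M => TangentSpace 𝓘(ℝ, Euc m) x)]
  [IsContMDiffRiemannianBundle 𝓘(ℝ, Euc m) ∞ (Euc m)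
      (fun x : M => TangentSpace 𝓘(ℝ, Euc m) x)]
  [IsRiemannianManifold 𝓘(ℝ, Euc m) M] [SigmaCompactSpace M]

/-- A `1`-Lipschitz function on a Riemannian manifold is at bounded distance from a smooth
function whose gradient is bounded by a constant close to `1`. -/
lemma exists_smooth_approx_of_lipschitz {r : M → ℝ} (hr : LipschitzWith 1 r) {η : ℝ}
    (hη : 1 < η) :
    ∃ ρ : M → ℝ, ContMDiff 𝓘(ℝ, Euc m) 𝓘(ℝ, ℝ) ∞ ρ ∧
      ∀ x, |ρ x - r x| ≤ 1 ∧ ‖riemGradient (m := m) ρ x‖ ≤ η := by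
  have hloc : LocallyCompactSpace M := ChartedSpace.locallyCompactSpace (Euc m) M
  have : SecondCountableTopology M := ChartedSpace.secondCountable_of_sigmaCompact (Euc m) M
  set ε := (η - 1) / 2 with hε_def
  have hε : 0 < ε := by simp only [ε]; linarith
  set η₀ := Real.sqrt (1 + ε) with hη₀_def
  have hη₀ : 1 < η₀ := Real.lt_sqrt_of_sq_lt (by linarith)
  have hη₀sq : η₀ * η₀ = 1 + ε := Real.mul_self_sqrt (by linarith)
  choose U hUo hpU hU using fun p : M => exists_local_smooth_approx (m := m) hr p hη₀
  choose K hKc hKn using fun p : M => exists_compact_mem_nhds p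
  obtain ⟨t, ht, htU⟩ := TopologicalSpace.countable_cover_nhds
    (f := fun p => U p ∩ interior (K p)) (fun p => ((hUo p).inter isOpen_interior).mem_nhds
      ⟨hpU p, mem_interior_iff_mem_nhds.2 (hKn p)⟩)
  have : Countable t := ht
  obtain ⟨χ, hχ⟩ := SmoothPartitionOfUnity.exists_isSubordinate 𝓘(ℝ, Euc m) isClosed_univ
    (fun p : t => U (p : M) ∩ interior (K (p : M)))
    (fun p => (hUo p).inter isOpen_interior) (by rw [← htU, biUnion_eq_iUnion])
  have hχ1 : ∀ i, ContMDiff 𝓘(ℝ, Euc m) 𝓘(ℝ, ℝ) 1 (χ i) := fun i =>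
    (χ i).contMDiff.of_le (by simp)
  choose C hC using fun i : t => exists_norm_riemGradient_le_of_isCompact (hχ1 i) (hKc i)
  have : Encodable t := ht.toEncodable
  obtain ⟨w, hw0, c, hwsum, hc⟩ := posSumOfEncodable hε t
  have hCnn : ∀ i, 0 < |C i| + 1 := fun i => by positivity
  choose ρ hρs hρ using fun i : t => hU i (min 1 (w i / (|C i| + 1)))
    (lt_min one_pos (div_pos (hw0 i) (hCnn i)))
  have hsub : ∀ i, ∀ x ∈ tsupport (χ i), x ∈ U i := fun i x hx => (hχ i hx).1
  have hcm : ContMDiff 𝓘(ℝ, Euc m) 𝓘(ℝ, ℝ) ∞ fun x => ∑ᶠ i, χ i x • ρ i x :=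
    χ.contMDiff_finsum_smul fun i x hx =>
      (hρs i).contMDiffAt ((hUo i).mem_nhds (hsub i x hx))
  refine ⟨_, hcm, fun x => ⟨?_, ?_⟩⟩
  · have h1 := χ.finsum_smul_mem_convex (g := ρ) (t := Icc (r x - 1) (r x + 1)) (mem_univ x)
      (fun i hi => ?_) (convex_Icc _ _)
    · rw [abs_le]; constructor <;> linarith [h1.1, h1.2]
    · have h2 := (hρ i x (hsub i x (subset_tsupport _ hi))).1.trans (min_le_left _ _)
      rw [abs_le] at h2
      constructor <;> linarith [h2.1, h2.2]
  · set F := χ.fintsupport x with hF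
    have hF' : ∀ i ∈ F, x ∈ tsupport (χ i) := fun i hi => (χ.mem_fintsupport_iff x i).1 hi
    have hev : (fun y => (∑ᶠ i, χ i y • ρ i y) - r x) =ᶠ[𝓝 x]
        fun y => ∑ i ∈ F, χ i y * (ρ i y - r x) := by
      filter_upwards [χ.eventually_finsupport_subset x] with y hy
      have h1 : ∑ᶠ i, χ i y • ρ i y = ∑ i ∈ F, χ i y • ρ i y := by
        rw [← χ.sum_finsupport_smul_eq_finsum y ρ]
        refine Finset.sum_subset hy fun i _ hi => ?_
        rw [χ.mem_finsupport, Function.notMem_support] at hi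
        simp [hi]
      have h2 : ∑ i ∈ F, χ i y = 1 := χ.sum_finsupport' y (mem_univ y) hy
      rw [h1]
      simp only [mul_sub, Finset.sum_sub_distrib, ← Finset.sum_mul, h2, one_mul, smul_eq_mul]
    have hρd : ∀ i ∈ F, MDifferentiableAt 𝓘(ℝ, Euc m) 𝓘(ℝ, ℝ) (ρ i) x := fun i hi =>
      ((hρs i).contMDiffAt ((hUo i).mem_nhds (hsub i x (hF' i hi)))).mdifferentiableAt (by simp)
    have hχd : ∀ i, MDifferentiableAt 𝓘(ℝ, Euc m) 𝓘(ℝ, ℝ) (χ i) x := fun i =>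
      ((hχ1 i).contMDiffAt).mdifferentiableAt (by simp)
    have hρd' : ∀ i ∈ F, MDifferentiableAt 𝓘(ℝ, Euc m) 𝓘(ℝ, ℝ) (fun y => ρ i y - r x) x :=
      fun i hi => (hρd i hi).sub mdifferentiableAt_const
    have hgrad : riemGradient (m := m) (fun y => ∑ᶠ i, χ i y • ρ i y) x =
        ∑ i ∈ F, (χ i x • riemGradient (m := m) (ρ i) x +
          (ρ i x - r x) • riemGradient (m := m) (χ i) x) := by
      have h1 := riemGradient_sub (hcm.contMDiffAt.mdifferentiableAt (x := x) (by simp))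
        (mdifferentiableAt_const (c := r x))
      rw [riemGradient_const, sub_zero] at h1
      rw [← h1, riemGradient_congr hev,
        (riemGradient_sum (U := fun i y => χ i y * (ρ i y - r x)) F
          fun i hi => (hχd i).mul (hρd' i hi)).2]
      refine Finset.sum_congr rfl fun i hi => ?_
      rw [riemGradient_mul (hχd i) (hρd' i hi),
        riemGradient_sub (hρd i hi) mdifferentiableAt_const, riemGradient_const, sub_zero]
    rw [hgrad]
    have hsum1 : ∑ i ∈ F, χ i x = 1 :=
      χ.sum_finsupport' x (mem_univ x) (χ.finsupport_subset_fintsupport x)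
    have hterm : ∀ i ∈ F, ‖χ i x • riemGradient (m := m) (ρ i) x +
        (ρ i x - r x) • riemGradient (m := m) (χ i) x‖ ≤ χ i x * (1 + ε) + w i := by
      intro i hi
      have hxU := hsub i x (hF' i hi)
      refine (norm_add_le _ _).trans (add_le_add ?_ ?_)
      · rw [norm_smul, Real.norm_of_nonneg (χ.nonneg i x), ← hη₀sq]
        exact mul_le_mul_of_nonneg_left (hρ i x hxU).2 (χ.nonneg i x)
      · rw [norm_smul, Real.norm_eq_abs]
        have h1 := (hρ i x hxU).1.trans (min_le_right _ _)
        have h2 : ‖riemGradient (m := m) (χ i) x‖ ≤ |C i| + 1 :=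
          (hC i x (interior_subset (hχ i (hF' i hi)).2)).trans
            ((le_abs_self _).trans (by linarith))
        calc _ ≤ w i / (|C i| + 1) * (|C i| + 1) :=
              mul_le_mul h1 h2 (norm_nonneg _) (div_nonneg (hw0 i).le (hCnn i).le)
          _ = w i := div_mul_cancel₀ _ (hCnn i).ne'
    refine (norm_sum_le_of_le F hterm).trans ?_
    rw [Finset.sum_add_distrib, ← Finset.sum_mul, hsum1]
    have := sum_le_hasSum F (fun i _ => (hw0 i).le) hwsum
    simp only [ε] at *
    linarith

end GlobalSmoothing

section WeakGradients

variable {m : ℕ} {M : Type*} [MetricSpace M] [ChartedSpace (Euc m) M]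
  [IsManifold 𝓘(ℝ, Euc m) ∞ M] [RiemannianBundle (fun x : M => TangentSpace 𝓘(ℝ, Euc m) x)]
  [IsContMDiffRiemannianBundle 𝓘(ℝ, Euc m) ∞ (Euc m)
      (fun x : M => TangentSpace 𝓘(ℝ, Euc m) x)]
  [SigmaCompactSpace M] [MeasurableSpace M] [BorelSpace M]

lemma mdifferentiableAt_of_contMDiffOn {Ω₀ : Set M} (hΩ₀ : IsOpen Ω₀) {U : M → ℝ}
    (hU : ContMDiffOn 𝓘(ℝ, Euc m) 𝓘(ℝ, ℝ) 1 U Ω₀) {x : M} (hx : x ∈ Ω₀) :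
    MDifferentiableAt 𝓘(ℝ, Euc m) 𝓘(ℝ, ℝ) U x :=
  (hU.contMDiffAt (hΩ₀.mem_nhds hx)).mdifferentiableAt (by simp)

lemma aemeasurable_enorm_sub_add {Ω₀ : Set M} (hΩ₀ : IsOpen Ω₀) {U u : M → ℝ}
    {G : ∀ x : M, Tan (m := m) x} (hU : ContMDiffOn 𝓘(ℝ, Euc m) 𝓘(ℝ, ℝ) 1 U Ω₀)
    (hu : AEMeasurable u ((riemVolume m M).restrict Ω₀)) (hG : MeasurableField Ω₀ G) :
    AEMeasurable (fun x => ‖U x - u x‖ₑ + ‖riemGradient (m := m) U x - G x‖ₑ)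
      ((riemVolume m M).restrict Ω₀) :=
  ((hU.continuousOn.aemeasurable hΩ₀.measurableSet).sub hu).enorm.add
    (((measurableField_riemGradient hΩ₀ hU).sub hG).enorm hΩ₀)

lemma aemeasurable_enorm_add {Ω₀ : Set M} (hΩ₀ : IsOpen Ω₀) {U : M → ℝ}
    (hU : ContMDiffOn 𝓘(ℝ, Euc m) 𝓘(ℝ, ℝ) 1 U Ω₀) :
    AEMeasurable (fun x => ‖U x‖ₑ + ‖riemGradient (m := m) U x‖ₑ)
      ((riemVolume m M).restrict Ω₀) :=
  (hU.continuousOn.aemeasurable hΩ₀.measurableSet).enorm.add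
    ((measurableField_riemGradient hΩ₀ hU).enorm hΩ₀)

/-- A weak gradient is integrable on relatively compact open subsets. -/
lemma HasWeakGradient.lintegral_enorm_lt_top {Ω : Set M} {u : M → ℝ}
    {G : ∀ x : M, Tan (m := m) x} (hu : HasWeakGradient Ω u G) {Ω₀ : Set M} (hΩ₀ : IsOpen Ω₀)
    (hc : IsCompact (closure Ω₀)) (hsub : closure Ω₀ ⊆ Ω) :
    ∫⁻ x in Ω₀, ‖G x‖ₑ ∂(riemVolume m M) < ⊤ := by
  obtain ⟨U, hU, hlim⟩ := hu.approx Ω₀ hΩ₀ hc hsub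
  obtain ⟨n, hn⟩ := (hlim.eventually_lt_const (show (0 : ENNReal) < 1 by simp)).exists
  calc ∫⁻ x in Ω₀, ‖G x‖ₑ ∂(riemVolume m M)
      ≤ ∫⁻ x in Ω₀, ((‖U n x‖ₑ + ‖riemGradient (m := m) (U n) x‖ₑ) +
        (‖U n x - u x‖ₑ + ‖riemGradient (m := m) (U n) x - G x‖ₑ)) ∂(riemVolume m M) := by
        refine lintegral_mono fun x => ?_
        have h1 : ‖G x‖ₑ ≤ ‖riemGradient (m := m) (U n) x‖ₑ +
            ‖riemGradient (m := m) (U n) x - G x‖ₑ := by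
          have := enorm_sub_le (a := riemGradient (m := m) (U n) x)
            (b := riemGradient (m := m) (U n) x - G x)
          simpa using this
        exact h1.trans (add_le_add le_add_self le_add_self)
    _ = _ := lintegral_add_left' (aemeasurable_enorm_add hΩ₀ (hU n).1) _
    _ < ⊤ := ENNReal.add_lt_top.2 ⟨(hU n).2, hn.trans (by simp)⟩

lemma HasWeakGradient.congr {Ω : Set M} (hΩ : IsOpen Ω) {u u' : M → ℝ}
    {G G' : ∀ x : M, Tan (m := m) x} (hu : HasWeakGradient Ω u G)
    (h : ∀ x ∈ Ω, u x = u' x) (h' : ∀ x ∈ Ω, G x = G' x) : HasWeakGradient Ω u' G' where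
  measurable := hu.measurable.congr <| by
    filter_upwards [ae_restrict_mem hΩ.measurableSet] with x hx using h x hx
  measurable_grad := hu.measurable_grad.congr hΩ h'
  approx := fun Ω₀ ho hc hsub => by
    obtain ⟨U, hU, hlim⟩ := hu.approx Ω₀ ho hc hsub
    refine ⟨U, hU, hlim.congr fun n => setLIntegral_congr_fun ho.measurableSet fun x hx => ?_⟩
    have hxΩ := hsub (subset_closure hx)
    simp only [h x hxΩ, h' x hxΩ]

lemma HasWeakGradient.sub {Ω : Set M} {u v : M → ℝ}
    {G H : ∀ x : M, Tan (m := m) x} (hu : HasWeakGradient Ω u G) (hv : HasWeakGradient Ω v H) :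
    HasWeakGradient Ω (fun x => u x - v x) (fun x => G x - H x) where
  measurable := hu.measurable.sub hv.measurable
  measurable_grad := hu.measurable_grad.sub hv.measurable_grad
  approx := fun Ω₀ ho hc hsub => by
    obtain ⟨U, hU, hUlim⟩ := hu.approx Ω₀ ho hc hsub
    obtain ⟨V, hV, hVlim⟩ := hv.approx Ω₀ ho hc hsub
    have hsub' : Ω₀ ⊆ Ω := subset_closure.trans hsub
    have hgrad : ∀ n, ∀ x ∈ Ω₀, riemGradient (m := m) (fun y => U n y - V n y) x =
        riemGradient (m := m) (U n) x - riemGradient (m := m) (V n) x := fun n x hx =>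
      riemGradient_sub (mdifferentiableAt_of_contMDiffOn ho (hU n).1 hx)
        (mdifferentiableAt_of_contMDiffOn ho (hV n).1 hx)
    refine ⟨fun n x => U n x - V n x, fun n => ⟨(hU n).1.sub (hV n).1, ?_⟩, ?_⟩
    · calc _ ≤ ∫⁻ x in Ω₀, ((‖U n x‖ₑ + ‖riemGradient (m := m) (U n) x‖ₑ) +
            (‖V n x‖ₑ + ‖riemGradient (m := m) (V n) x‖ₑ)) ∂(riemVolume m M) := by
            refine setLIntegral_mono' ho.measurableSet fun x hx => ?_
            rw [hgrad n x hx, add_add_add_comm]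
            exact add_le_add enorm_sub_le enorm_sub_le
        _ = _ := lintegral_add_left' (aemeasurable_enorm_add ho (hU n).1) _
        _ < ⊤ := ENNReal.add_lt_top.2 ⟨(hU n).2, (hV n).2⟩
    · have hsum := hUlim.add hVlim
      rw [add_zero] at hsum
      refine tendsto_of_tendsto_of_tendsto_of_le_of_le tendsto_const_nhds hsum
        (fun n => zero_le) fun n => ?_
      have hm := aemeasurable_enorm_sub_add ho (hU n).1
        (hu.measurable.mono_measure (Measure.restrict_mono hsub' le_rfl))
        (hu.measurable_grad.mono hsub')
      dsimp only
      rw [← lintegral_add_left' hm]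
      refine setLIntegral_mono' ho.measurableSet fun x hx => ?_
      rw [hgrad n x hx, add_add_add_comm]
      refine add_le_add ?_ ?_
      · rw [show U n x - V n x - (u x - v x) = (U n x - u x) - (V n x - v x) by ring]
        exact enorm_sub_le
      · rw [sub_sub_sub_comm]
        exact enorm_sub_le

/-- Chain and product rule: `ψ · Λ(z)` has the expected weak gradient if `ψ` is `C¹` and bounded
with bounded gradient and `Λ` is `C¹` with bounded derivative and `Λ(0) = 0`. -/
lemma HasWeakGradient.mul_comp {Ω : Set M} {z : M → ℝ}
    {Z : ∀ x : M, Tan (m := m) x} (hz : HasWeakGradient Ω z Z)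
    {ψ : M → ℝ} (hψ : ContMDiff 𝓘(ℝ, Euc m) 𝓘(ℝ, ℝ) 1 ψ) {a d : ℝ} (hψa : ∀ x, |ψ x| ≤ a)
    (hψd : ∀ x, ‖riemGradient (m := m) ψ x‖ ≤ d)
    {Λ Λ' : ℝ → ℝ} (hΛ : ∀ s, HasDerivAt Λ (Λ' s) s) (hΛ' : Continuous Λ') {l : ℝ}
    (hl : ∀ s, |Λ' s| ≤ l) (hΛ0 : Λ 0 = 0) :
    HasWeakGradient Ω (fun x => ψ x * Λ (z x))
      (fun x => (ψ x * Λ' (z x)) • Z x + Λ (z x) • riemGradient (m := m) ψ x) where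
  measurable := by
    have hΛc : Continuous Λ := continuous_iff_continuousAt.2 fun s => (hΛ s).continuousAt
    exact hψ.continuous.measurable.aemeasurable.mul (hΛc.measurable.comp_aemeasurable hz.measurable)
  measurable_grad := by
    have hΛc : Continuous Λ := continuous_iff_continuousAt.2 fun s => (hΛ s).continuousAt
    refine MeasurableField.add (MeasurableField.smul ?_ hz.measurable_grad)
      (MeasurableField.smul (hΛc.measurable.comp_aemeasurable hz.measurable) ?_)
    · exact hψ.continuous.measurable.aemeasurable.mul
        (hΛ'.measurable.comp_aemeasurable hz.measurable)
    · exact (measurableField_riemGradient isOpen_univ hψ.contMDiffOn).mono (subset_univ _)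
  approx := fun Ω₀ ho hc hsub => by
    have hsub' : Ω₀ ⊆ Ω := subset_closure.trans hsub
    obtain ⟨U, hU, hlim⟩ := hz.approx Ω₀ ho hc hsub
    have hzm : AEMeasurable z ((riemVolume m M).restrict Ω₀) :=
      hz.measurable.mono_measure (Measure.restrict_mono hsub' le_rfl)
    have hZm : MeasurableField Ω₀ Z := hz.measurable_grad.mono hsub'
    have hUm : ∀ n, AEMeasurable (U n) ((riemVolume m M).restrict Ω₀) := fun n =>
      (hU n).1.continuousOn.aemeasurable ho.measurableSet
    have hZfin := hz.lintegral_enorm_lt_top ho hc hsub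
    have hΛC1 : ContDiff ℝ 1 Λ := by
      rw [contDiff_one_iff_deriv]
      exact ⟨fun s => (hΛ s).differentiableAt, by rwa [funext fun s => (hΛ s).deriv]⟩
    have hl0 : 0 ≤ l := (abs_nonneg _).trans (hl 0)
    have hLip : ∀ s t, |Λ s - Λ t| ≤ l * |s - t| := fun s t => by
      have := Convex.norm_image_sub_le_of_norm_hasDerivWithin_le (𝕜 := ℝ) (f := Λ) (f' := Λ')
        (s := univ) (C := l) (fun s _ => (hΛ s).hasDerivWithinAt) (fun s _ => hl s) convex_univ
        (mem_univ t) (mem_univ s)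
      simpa only [Real.norm_eq_abs] using this
    have hLip0 : ∀ s, |Λ s| ≤ l * |s| := fun s => by simpa [hΛ0] using hLip s 0
    obtain ⟨ns, hns, hae⟩ : ∃ ns : ℕ → ℕ, StrictMono ns ∧
        ∀ᵐ x ∂(riemVolume m M).restrict Ω₀, Tendsto (fun i => U (ns i) x) atTop (𝓝 (z x)) := by
      refine TendstoInMeasure.exists_seq_tendsto_ae (tendstoInMeasure_of_tendsto_eLpNorm
        one_ne_zero (fun n => (hUm n).aestronglyMeasurable) hzm.aestronglyMeasurable ?_)
      refine tendsto_of_tendsto_of_tendsto_of_le_of_le tendsto_const_nhds hlim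
        (fun n => zero_le) fun n => ?_
      dsimp only
      rw [eLpNorm_one_eq_lintegral_enorm]
      exact lintegral_mono fun x => by simp
    have ha0 : Nonempty M → 0 ≤ a := fun ⟨x⟩ => (abs_nonneg _).trans (hψa x)
    have hd0 : Nonempty M → 0 ≤ d := fun ⟨x⟩ => (norm_nonneg _).trans (hψd x)
    have hgrad : ∀ n, ∀ x ∈ Ω₀, riemGradient (m := m) (fun y => ψ y * Λ (U n y)) x =
        (ψ x * Λ' (U n x)) • riemGradient (m := m) (U n) x +
          Λ (U n x) • riemGradient (m := m) ψ x := fun n x hx => by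
      have h1 := mdifferentiableAt_of_contMDiffOn ho (hU n).1 hx
      have h2 : MDifferentiableAt 𝓘(ℝ, Euc m) 𝓘(ℝ, ℝ) (fun y => Λ (U n y)) x :=
        ((hΛ (U n x)).hasFDerivAt.differentiableAt.mdifferentiableAt).comp x h1
      rw [riemGradient_mul (hψ.contMDiffAt.mdifferentiableAt (by simp)) h2,
        riemGradient_comp h1 (hΛ _), smul_smul]
    have hK : ∀ x : M, 0 ≤ a * l + l * d := fun x => by
      have := ha0 ⟨x⟩
      have := hd0 ⟨x⟩
      positivity
    refine ⟨fun k x => ψ x * Λ (U (ns k) x), fun k => ⟨?_, ?_⟩, ?_⟩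
    · exact (hψ.contMDiffOn).mul (hΛC1.contMDiff.comp_contMDiffOn (hU (ns k)).1)
    · refine lt_of_le_of_lt (b := ∫⁻ x in Ω₀, ENNReal.ofReal (a * l + l * d) *
        (‖U (ns k) x‖ₑ + ‖riemGradient (m := m) (U (ns k)) x‖ₑ) ∂(riemVolume m M)) ?_ ?_
      · refine setLIntegral_mono' ho.measurableSet fun x hx => ?_
        have ha := ha0 ⟨x⟩
        have hd := hd0 ⟨x⟩
        rw [hgrad _ x hx]
        simp only [← ofReal_norm]
        rw [← ENNReal.ofReal_add (norm_nonneg _) (norm_nonneg _),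
          ← ENNReal.ofReal_add (norm_nonneg _) (norm_nonneg _), ← ENNReal.ofReal_mul (hK x)]
        refine ENNReal.ofReal_le_ofReal ?_
        have h1 : ‖ψ x * Λ (U (ns k) x)‖ ≤ a * (l * ‖U (ns k) x‖) := by
          rw [norm_mul]
          exact mul_le_mul (hψa x) (hLip0 _) (norm_nonneg _) ha
        have h2 : ‖(ψ x * Λ' (U (ns k) x)) • riemGradient (m := m) (U (ns k)) x +
            Λ (U (ns k) x) • riemGradient (m := m) ψ x‖ ≤
            a * l * ‖riemGradient (m := m) (U (ns k)) x‖ + l * ‖U (ns k) x‖ * d := by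
          refine (norm_add_le _ _).trans (add_le_add ?_ ?_)
          · rw [norm_smul, norm_mul]
            exact mul_le_mul_of_nonneg_right
              (mul_le_mul (hψa x) (hl _) (norm_nonneg _) ha) (norm_nonneg _)
          · rw [norm_smul]
            exact mul_le_mul (hLip0 _) (hψd x) (norm_nonneg _) (by positivity)
        have h3 : 0 ≤ l * d * ‖riemGradient (m := m) (U (ns k)) x‖ := by positivity
        nlinarith
      · rw [lintegral_const_mul' _ _ ENNReal.ofReal_ne_top]
        exact ENNReal.mul_lt_top ENNReal.ofReal_lt_top (hU (ns k)).2
    · have hlim1 : Tendsto (fun k => ENNReal.ofReal (a * l + l * d) * ∫⁻ x in Ω₀,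
          (‖U (ns k) x - z x‖ₑ + ‖riemGradient (m := m) (U (ns k)) x - Z x‖ₑ) ∂(riemVolume m M))
          atTop (𝓝 0) := by
        have := ENNReal.Tendsto.const_mul (a := ENNReal.ofReal (a * l + l * d))
          (hlim.comp hns.tendsto_atTop) (Or.inr ENNReal.ofReal_ne_top)
        simpa using this
      have hlim2 : Tendsto (fun k => ∫⁻ x in Ω₀, ENNReal.ofReal
          (a * |Λ' (U (ns k) x) - Λ' (z x)| * ‖Z x‖) ∂(riemVolume m M)) atTop (𝓝 0) := by
        have h0 : (0 : ENNReal) = ∫⁻ x in Ω₀, 0 ∂(riemVolume m M) := by simp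
        rw [h0]
        refine tendsto_lintegral_of_dominated_convergence'
          (fun x => ENNReal.ofReal (a * (2 * l)) * ‖Z x‖ₑ) ?_ ?_ ?_ ?_
        · intro k
          exact (((((hΛ'.measurable.comp_aemeasurable (hUm _)).sub
            (hΛ'.measurable.comp_aemeasurable hzm)).abs).const_mul a).mul
              (hZm.norm ho)).ennreal_ofReal
        · intro k
          refine Eventually.of_forall fun x => ?_
          have ha := ha0 ⟨x⟩
          dsimp only
          rw [← ofReal_norm, ← ENNReal.ofReal_mul (by positivity)]
          refine ENNReal.ofReal_le_ofReal (mul_le_mul_of_nonneg_right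
            (mul_le_mul_of_nonneg_left ?_ ha) (norm_nonneg _))
          have h1 := abs_sub (Λ' (U (ns k) x)) (Λ' (z x))
          linarith [hl (U (ns k) x), hl (z x)]
        · rw [lintegral_const_mul' _ _ ENNReal.ofReal_ne_top]
          exact (ENNReal.mul_lt_top ENNReal.ofReal_lt_top hZfin).ne
        · filter_upwards [hae] with x hx
          have h1 : Tendsto (fun k => a * |Λ' (U (ns k) x) - Λ' (z x)| * ‖Z x‖) atTop
              (𝓝 (a * |Λ' (z x) - Λ' (z x)| * ‖Z x‖)) :=
            ((((hΛ'.tendsto _).comp hx).sub_const _).abs.const_mul a).mul_const _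
          have h2 := ENNReal.tendsto_ofReal h1
          simpa using h2
      have hsum := hlim1.add hlim2
      rw [add_zero] at hsum
      refine tendsto_of_tendsto_of_tendsto_of_le_of_le tendsto_const_nhds hsum
        (fun n => zero_le) fun k => ?_
      dsimp only
      rw [← lintegral_const_mul' _ _ ENNReal.ofReal_ne_top, ← lintegral_add_left'
        ((aemeasurable_enorm_sub_add ho (hU (ns k)).1 hzm hZm).const_mul _)]
      refine setLIntegral_mono' ho.measurableSet fun x hx => ?_
      have ha := ha0 ⟨x⟩
      have hd := hd0 ⟨x⟩
      rw [hgrad _ x hx]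
      simp only [← ofReal_norm]
      rw [← ENNReal.ofReal_add (norm_nonneg _) (norm_nonneg _),
        ← ENNReal.ofReal_add (norm_nonneg _) (norm_nonneg _), ← ENNReal.ofReal_mul (hK x),
        ← ENNReal.ofReal_add (mul_nonneg (hK x) (by positivity)) (by positivity)]
      refine ENNReal.ofReal_le_ofReal ?_
      have h1 : ‖ψ x * Λ (U (ns k) x) - ψ x * Λ (z x)‖ ≤ a * (l * ‖U (ns k) x - z x‖) := by
        rw [← mul_sub, norm_mul]
        exact mul_le_mul (hψa x) (hLip _ _) (norm_nonneg _) ha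
      have h2 : (ψ x * Λ' (U (ns k) x)) • riemGradient (m := m) (U (ns k)) x +
          Λ (U (ns k) x) • riemGradient (m := m) ψ x -
          ((ψ x * Λ' (z x)) • Z x + Λ (z x) • riemGradient (m := m) ψ x) =
          (ψ x * Λ' (U (ns k) x)) • (riemGradient (m := m) (U (ns k)) x - Z x) +
          (ψ x * (Λ' (U (ns k) x) - Λ' (z x))) • Z x +
          (Λ (U (ns k) x) - Λ (z x)) • riemGradient (m := m) ψ x := by
        module
      have h3 : ‖(ψ x * Λ' (U (ns k) x)) • (riemGradient (m := m) (U (ns k)) x - Z x)‖ ≤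
          a * l * ‖riemGradient (m := m) (U (ns k)) x - Z x‖ := by
        rw [norm_smul, norm_mul]
        exact mul_le_mul_of_nonneg_right
          (mul_le_mul (hψa x) (hl _) (norm_nonneg _) ha) (norm_nonneg _)
      have h4 : ‖(ψ x * (Λ' (U (ns k) x) - Λ' (z x))) • Z x‖ ≤
          a * |Λ' (U (ns k) x) - Λ' (z x)| * ‖Z x‖ := by
        rw [norm_smul, norm_mul]
        exact mul_le_mul_of_nonneg_right
          (mul_le_mul_of_nonneg_right (hψa x) (abs_nonneg _)) (norm_nonneg _)
      have h5 : ‖(Λ (U (ns k) x) - Λ (z x)) • riemGradient (m := m) ψ x‖ ≤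
          l * ‖U (ns k) x - z x‖ * d := by
        rw [norm_smul]
        exact mul_le_mul (hLip _ _) (hψd x) (norm_nonneg _) (by positivity)
      rw [h2]
      have h6 := norm_add₃_le
        (a := (ψ x * Λ' (U (ns k) x)) • (riemGradient (m := m) (U (ns k)) x - Z x))
        (b := (ψ x * (Λ' (U (ns k) x) - Λ' (z x))) • Z x)
        (c := (Λ (U (ns k) x) - Λ (z x)) • riemGradient (m := m) ψ x)
      have h7 : 0 ≤ l * d * ‖riemGradient (m := m) (U (ns k)) x - Z x‖ := by positivity
      nlinarith

end WeakGradients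

section Energy

/-- The product of an integrable weight with a bounded function supported in `K`. -/
lemma integrable_weight_mul {X : Type*} [MeasurableSpace X] {ν : Measure X} {K : Set X}
    (hK : MeasurableSet K) {w g : X → ℝ} (hw : AEMeasurable w ν) (hwK : IntegrableOn w K ν)
    (hg : AEMeasurable g ν) {C : ℝ} (hgC : ∀ x ∈ K, |g x| ≤ C)
    (hg0 : ∀ᵐ x ∂ν, x ∉ K → g x = 0) : Integrable (fun x => w x * g x) ν := by
  have hdom : Integrable (K.indicator fun x => C * |w x|) ν :=
    (integrable_indicator_iff hK).2 (hwK.abs.const_mul C)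
  refine hdom.mono' (hw.mul hg).aestronglyMeasurable ?_
  filter_upwards [hg0] with x hx
  by_cases hxK : x ∈ K
  · rw [indicator_of_mem hxK, Real.norm_eq_abs, abs_mul, mul_comm]
    exact mul_le_mul_of_nonneg_right (hgC x hxK) (abs_nonneg _)
  · rw [indicator_of_notMem hxK, hx hxK]
    simp

variable {m : ℕ} {M : Type*} [MetricSpace M] [ChartedSpace (Euc m) M]
  [IsManifold 𝓘(ℝ, Euc m) ∞ M] [RiemannianBundle (fun x : M => TangentSpace 𝓘(ℝ, Euc m) x)]
  [IsContMDiffRiemannianBundle 𝓘(ℝ, Euc m) ∞ (Euc m)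
      (fun x : M => TangentSpace 𝓘(ℝ, Euc m) x)]
  [SigmaCompactSpace M] [MeasurableSpace M] [BorelSpace M]

/-- The pairing of a bounded field with a compactly supported weak gradient is integrable. -/
lemma integrable_weight_inner {Ω : Set M} (hΩ : IsOpen Ω) {w : M → ℝ} (hw : IsWeight m Ω w)
    {X : ∀ x : M, Tan (m := m) x} (hX : MeasurableField Ω X) {k : ℝ}
    (hXk : ∀ x ∈ Ω, ‖X x‖ ≤ k) {φ : M → ℝ} {Φ : ∀ x : M, Tan (m := m) x}
    (hφ : HasWeakGradient Ω φ Φ) {K : Set M} (hK : IsCompact K) (hKΩ : K ⊆ Ω)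
    (hΦ0 : ∀ x ∈ Ω, x ∉ K → Φ x = 0) :
    Integrable (fun x => w x * inner ℝ (X x) (Φ x)) ((riemVolume m M).restrict Ω) := by
  have hloc : LocallyCompactSpace M := ChartedSpace.locallyCompactSpace (Euc m) M
  obtain ⟨Ω₀, ho, hKo, hcl, hc⟩ := exists_open_between_and_isCompact_closure hK hΩ hKΩ
  have hΩ₀Ω : Ω₀ ⊆ Ω := subset_closure.trans hcl
  have hfin := hφ.lintegral_enorm_lt_top ho hc hcl
  obtain ⟨C, hC⟩ := hw.locallyBounded K hK hKΩ
  have hint : IntegrableOn (fun x => ‖Φ x‖) Ω₀ (riemVolume m M) := by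
    refine ⟨((hφ.measurable_grad.mono hΩ₀Ω).norm ho).aestronglyMeasurable, ?_⟩
    simpa [HasFiniteIntegral] using hfin
  have hdom : Integrable (K.indicator fun x => |C| * (k * ‖Φ x‖))
      ((riemVolume m M).restrict Ω) := by
    rw [integrable_indicator_iff hK.measurableSet, IntegrableOn,
      Measure.restrict_restrict hK.measurableSet, inter_eq_left.2 hKΩ]
    exact ((hint.mono_set hKo).const_mul k).const_mul |C|
  have hCΩ : ∀ᵐ x ∂(riemVolume m M).restrict Ω, x ∈ K → |w x| ≤ C :=
    ae_restrict_of_ae ((ae_restrict_iff' hK.measurableSet).1 hC)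
  refine hdom.mono' (hw.measurable.mul (hX.inner hΩ hφ.measurable_grad)).aestronglyMeasurable ?_
  filter_upwards [ae_restrict_mem hΩ.measurableSet, hCΩ] with x hx hxC
  by_cases hxK : x ∈ K
  · rw [indicator_of_mem hxK, norm_mul]
    refine mul_le_mul ((hxC hxK).trans (le_abs_self C)) ?_ (norm_nonneg _) (abs_nonneg _)
    exact (norm_inner_le_norm _ _).trans (mul_le_mul_of_nonneg_right (hXk x hx) (norm_nonneg _))
  · rw [indicator_of_notMem hxK, hΦ0 x hx hxK, inner_zero_right]
    simp

/-- The super-level set of `u - v` in a compact set is a compact subset of `Ω`, if the level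
exceeds the values of `u - v` on the boundary of `Ω`. -/
lemma isCompact_superlevel {X : Type*} [MetricSpace X] {Ω : Set X} (hΩ : IsOpen Ω) {u v : X → ℝ}
    (huc : ContinuousOn u (closure Ω)) (hvc : ContinuousOn v (closure Ω)) {γ : ℝ}
    (hγ : ∀ y ∈ frontier Ω, u y - v y < γ) {B : Set X} (hB : IsCompact B) :
    IsCompact ({x ∈ closure Ω | γ ≤ u x - v x} ∩ B) ∧
      {x ∈ closure Ω | γ ≤ u x - v x} ∩ B ⊆ Ω := by
  constructor
  · refine hB.inter_left ?_
    have := (huc.sub hvc).preimage_isClosed_of_isClosed isClosed_closure (isClosed_Ici (a := γ))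
    exact this
  · rintro x ⟨⟨hxc, hxγ⟩, -⟩
    by_contra hx
    have : x ∈ frontier Ω := by
      rw [frontier, hΩ.interior_eq]
      exact ⟨hxc, hx⟩
    exact absurd hxγ (not_le.2 (hγ x this))

/-- The energy inequality: testing the two differential inequalities with `ψ Λ(u - v)`. -/
lemma energy_inequality {Ω : Set M} (hΩ : IsOpen Ω)
    {A : ∀ x : M, ℝ → Tan (m := m) x → Tan (m := m) x} {k : ℝ} (hk : 0 < k)
    (hA : IsCaratheodory Ω A) (hAk : IsWeaklyOneCoercive Ω A k) (hAmono : IsStrictlyMonotone Ω A)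
    {w : M → ℝ} (hw : IsWeight m Ω w) {b : M → ℝ} (hb : Continuous b) (hbpos : ∀ x, 0 < b x)
    {f : ℝ → ℝ} (hf : Continuous f) {α : ℝ} (hα : 0 < α)
    (hfα : ∀ s t : ℝ, t < s → α * (s - t) ≤ f s - f t)
    {u v : M → ℝ} {Du Dv : ∀ x : M, Tan (m := m) x}
    (hu : HasWeakGradient Ω u Du) (huc : ContinuousOn u (closure Ω))
    (hv : HasWeakGradient Ω v Dv) (hvc : ContinuousOn v (closure Ω))
    (hLu : WeakGE Ω w A u Du (fun x => b x * f (u x)))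
    (hLv : WeakLE Ω w A v Dv (fun x => b x * f (v x)))
    {γ : ℝ} (hγ0 : 0 < γ) (hγ : ∀ y ∈ frontier Ω, u y - v y < γ)
    {Λ Λ' : ℝ → ℝ} (hΛ : ∀ s, HasDerivAt Λ (Λ' s) s) (hΛ' : Continuous Λ') {l : ℝ}
    (hl : ∀ s, |Λ' s| ≤ l) (hΛ'0 : ∀ s, 0 ≤ Λ' s) (hΛz : ∀ s ≤ γ, Λ s = 0)
    (hΛ'z : ∀ s ≤ γ, Λ' s = 0) (hΛ01 : ∀ s, 0 ≤ Λ s ∧ Λ s ≤ 1)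
    {ψ : M → ℝ} (hψ : ContMDiff 𝓘(ℝ, Euc m) 𝓘(ℝ, ℝ) 1 ψ) {a d : ℝ}
    (hψa : ∀ x, 0 ≤ ψ x ∧ ψ x ≤ a) (hψd : ∀ x, ‖riemGradient (m := m) ψ x‖ ≤ d)
    {B : Set M} (hB : IsCompact B) (hψB : ∀ x, x ∉ B → ψ x = 0)
    (hwB : IntegrableOn w (B ∩ Ω) (riemVolume m M)) :
    Integrable (fun x => w x * (Λ (u x - v x) *
      (α * γ * b x * ψ x - 2 * k * ‖riemGradient (m := m) ψ x‖)))
      ((riemVolume m M).restrict Ω) ∧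
    ∫ x in Ω, w x * (Λ (u x - v x) *
      (α * γ * b x * ψ x - 2 * k * ‖riemGradient (m := m) ψ x‖)) ∂(riemVolume m M) ≤ 0 := by
  obtain ⟨hKc, hKΩ⟩ := isCompact_superlevel hΩ huc hvc hγ hB
  set K : Set M := {x ∈ closure Ω | γ ≤ u x - v x} ∩ B with hKdef
  have hΛc : Continuous Λ := continuous_iff_continuousAt.2 fun s => (hΛ s).continuousAt
  have hgrad0 : ∀ x, x ∉ B → riemGradient (m := m) ψ x = 0 := fun x hx => by
    have : ψ =ᶠ[𝓝 x] fun _ => 0 := by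
      filter_upwards [hB.isClosed.isOpen_compl.mem_nhds hx] with y hy using hψB y hy
    rw [riemGradient_congr this, riemGradient_const]
  have hnotK : ∀ x ∈ Ω, x ∉ K → u x - v x ≤ γ ∨ x ∉ B := fun x hx hxK => by
    by_contra hcon
    push Not at hcon
    exact hxK ⟨⟨subset_closure hx, hcon.1.le⟩, hcon.2⟩
  set Φ : ∀ x : M, Tan (m := m) x := fun x =>
    (ψ x * Λ' (u x - v x)) • (Du x - Dv x) + Λ (u x - v x) • riemGradient (m := m) ψ x with hΦdef
  set φ : M → ℝ := Ω.indicator fun x => ψ x * Λ (u x - v x) with hφdef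
  have hφΩ : ∀ x ∈ Ω, φ x = ψ x * Λ (u x - v x) := fun x hx => indicator_of_mem hx _
  have hφw : HasWeakGradient Ω φ Φ :=
    ((hu.sub hv).mul_comp hψ (a := a) (fun x => by rw [abs_of_nonneg (hψa x).1]; exact (hψa x).2)
      hψd hΛ hΛ' hl (hΛz 0 hγ0.le)).congr hΩ (fun x hx => (hφΩ x hx).symm) fun x _ => rfl
  have hΦ0 : ∀ x ∈ Ω, x ∉ K → Φ x = 0 := fun x hx hxK => by
    simp only [hΦdef]
    rcases hnotK x hx hxK with h | h
    · rw [hΛz _ h, hΛ'z _ h]; simp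
    · rw [hψB x h, hgrad0 x h]; simp
  have hφ0 : ∀ x ∈ Ω, x ∉ K → φ x = 0 := fun x hx hxK => by
    rw [hφΩ x hx]
    rcases hnotK x hx hxK with h | h
    · rw [hΛz _ h]; simp
    · rw [hψB x h]; simp
  have htest : IsTestFunction Ω φ Φ := by
    refine ⟨hφw, ⟨K, hKc, hKΩ, fun x hxK => ?_⟩, fun x => ?_⟩
    · by_cases hx : x ∈ Ω
      · exact hφ0 x hx hxK
      · exact indicator_of_notMem hx _
    · exact indicator_nonneg (fun x _ => mul_nonneg (hψa x).1 (hΛ01 _).1) x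
  have h1 := hLu φ Φ htest
  have h2 := hLv φ Φ htest
  have huΩ : ContinuousOn u Ω := huc.mono subset_closure
  have hvΩ : ContinuousOn v Ω := hvc.mono subset_closure
  have hwK : IntegrableOn w K ((riemVolume m M).restrict Ω) := by
    rw [IntegrableOn, Measure.restrict_restrict hKc.measurableSet, inter_eq_left.2 hKΩ]
    exact hwB.mono_set fun x hx => ⟨hx.2, hKΩ hx⟩
  have hcont_int : ∀ g : M → ℝ, ContinuousOn g Ω → (∀ x ∈ Ω, x ∉ K → g x = 0) →
      Integrable (fun x => w x * g x) ((riemVolume m M).restrict Ω) := fun g hg hg0 => by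
    obtain ⟨C, hC⟩ := hKc.exists_bound_of_continuousOn (hg.mono hKΩ)
    refine integrable_weight_mul hKc.measurableSet hw.measurable hwK
      (hg.aemeasurable hΩ.measurableSet) hC ?_
    filter_upwards [ae_restrict_mem hΩ.measurableSet] with x hx using hg0 x hx
  have hφc : ContinuousOn φ Ω :=
    ((hψ.continuous.continuousOn).mul (hΛc.comp_continuousOn (huΩ.sub hvΩ))).congr hφΩ
  have hI1 : Integrable (fun x => w x * (b x * f (u x)) * φ x) ((riemVolume m M).restrict Ω) := by
    have := hcont_int (fun x => b x * f (u x) * φ x)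
      ((hb.continuousOn.mul (hf.comp_continuousOn huΩ)).mul hφc)
      fun x hx hxK => by rw [hφ0 x hx hxK, mul_zero]
    simpa only [mul_assoc] using this
  have hI2 : Integrable (fun x => w x * (b x * f (v x)) * φ x) ((riemVolume m M).restrict Ω) := by
    have := hcont_int (fun x => b x * f (v x) * φ x)
      ((hb.continuousOn.mul (hf.comp_continuousOn hvΩ)).mul hφc)
      fun x hx hxK => by rw [hφ0 x hx hxK, mul_zero]
    simpa only [mul_assoc] using this
  have hI3 := integrable_weight_inner hΩ hw
    (MeasurableField.comp_caratheodory hΩ hA hu.measurable hu.measurable_grad)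
    (fun x hx => hAk.norm_le x hx _ _) hφw hKc hKΩ hΦ0
  have hI4 := integrable_weight_inner hΩ hw
    (MeasurableField.comp_caratheodory hΩ hA hv.measurable hv.measurable_grad)
    (fun x hx => hAk.norm_le x hx _ _) hφw hKc hKΩ hΦ0
  have hI5 : Integrable (fun x => w x * (Λ (u x - v x) *
      (α * γ * b x * ψ x - 2 * k * ‖riemGradient (m := m) ψ x‖)))
      ((riemVolume m M).restrict Ω) := by
    have hJ1 := hcont_int (fun x => Λ (u x - v x) * (α * γ * b x * ψ x))
      ((hΛc.comp_continuousOn (huΩ.sub hvΩ)).mul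
        ((continuousOn_const.mul hb.continuousOn).mul hψ.continuous.continuousOn))
      fun x hx hxK => by
        rcases hnotK x hx hxK with h | h
        · rw [hΛz _ h]; simp
        · rw [hψB x h]; simp
    have hJ2 : Integrable (fun x => w x * (Λ (u x - v x) *
        (2 * k * ‖riemGradient (m := m) ψ x‖))) ((riemVolume m M).restrict Ω) := by
      refine integrable_weight_mul (C := 2 * k * d) hKc.measurableSet hw.measurable hwK ?_ ?_ ?_
      · refine AEMeasurable.mul ((hΛc.comp_continuousOn (huΩ.sub hvΩ)).aemeasurable
          hΩ.measurableSet) (AEMeasurable.const_mul ?_ _)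
        exact ((measurableField_riemGradient isOpen_univ hψ.contMDiffOn).mono
          (subset_univ _)).norm hΩ
      · intro x _
        rw [abs_of_nonneg (mul_nonneg (hΛ01 _).1 (by positivity))]
        have h3 := mul_le_mul_of_nonneg_left (hψd x) (by positivity : 0 ≤ 2 * k)
        calc _ ≤ 1 * (2 * k * ‖riemGradient (m := m) ψ x‖) :=
              mul_le_mul_of_nonneg_right (hΛ01 _).2 (by positivity)
          _ ≤ _ := by rwa [one_mul]
      · filter_upwards [ae_restrict_mem hΩ.measurableSet] with x hx hxK
        rcases hnotK x hx hxK with h | h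
        · rw [hΛz _ h]; simp
        · rw [hgrad0 x h]; simp
    refine (hJ1.sub hJ2).congr (Eventually.of_forall fun x => ?_)
    simp only [Pi.sub_apply]
    ring
  refine ⟨hI5, ?_⟩
  have hI12 : Integrable (fun x => w x * (b x * f (u x)) * φ x - w x * (b x * f (v x)) * φ x)
      ((riemVolume m M).restrict Ω) := hI1.sub hI2
  have hI34 : Integrable (fun x => w x * inner ℝ (A x (u x) (Du x)) (Φ x) -
      w x * inner ℝ (A x (v x) (Dv x)) (Φ x)) ((riemVolume m M).restrict Ω) := hI3.sub hI4
  have hle : ∫ x in Ω, ((w x * (b x * f (u x)) * φ x - w x * (b x * f (v x)) * φ x) +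
      (w x * inner ℝ (A x (u x) (Du x)) (Φ x) - w x * inner ℝ (A x (v x) (Dv x)) (Φ x)))
      ∂(riemVolume m M) ≤ 0 := by
    rw [integral_add hI12 hI34, integral_sub hI1 hI2, integral_sub hI3 hI4]
    linarith
  refine le_trans (integral_mono_ae hI5 (hI12.add hI34) ?_) hle
  filter_upwards [ae_restrict_mem hΩ.measurableSet, hw.pos] with x hx hwx
  simp only [Pi.add_apply]
  rw [hφΩ x hx]
  have hfac : w x * (b x * f (u x)) * (ψ x * Λ (u x - v x)) -
      w x * (b x * f (v x)) * (ψ x * Λ (u x - v x)) +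
      (w x * inner ℝ (A x (u x) (Du x)) (Φ x) - w x * inner ℝ (A x (v x) (Dv x)) (Φ x)) =
      w x * (Λ (u x - v x) * (b x * (f (u x) - f (v x)) * ψ x) +
        inner ℝ (A x (u x) (Du x) - A x (v x) (Dv x)) (Φ x)) := by
    rw [inner_sub_left]; ring
  rw [hfac]
  refine mul_le_mul_of_nonneg_left ?_ hwx.le
  by_cases hz : u x - v x ≤ γ
  · simp only [hΦdef, hΛz _ hz, hΛ'z _ hz]
    simp
  push Not at hz
  have hvu : v x < u x := by linarith
  have hf1 := hfα _ _ hvu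
  have hf2 : α * γ ≤ f (u x) - f (v x) :=
    (mul_le_mul_of_nonneg_left hz.le hα.le).trans hf1
  have hmono := hAmono.monotone x hx (v x) (u x) (Du x) (Dv x) hvu.le
  have hX : ‖A x (u x) (Du x) - A x (v x) (Dv x)‖ ≤ 2 * k := by
    refine (norm_sub_le _ _).trans ?_
    linarith [hAk.norm_le x hx (u x) (Du x), hAk.norm_le x hx (v x) (Dv x)]
  have hin : -(2 * k * ‖riemGradient (m := m) ψ x‖) ≤
      inner ℝ (A x (u x) (Du x) - A x (v x) (Dv x)) (riemGradient (m := m) ψ x) := by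
    have h3 := abs_real_inner_le_norm (A x (u x) (Du x) - A x (v x) (Dv x))
      (riemGradient (m := m) ψ x)
    have h4 := mul_le_mul_of_nonneg_right hX (norm_nonneg (riemGradient (m := m) ψ x))
    have h5 := neg_abs_le (inner ℝ (A x (u x) (Du x) - A x (v x) (Dv x))
      (riemGradient (m := m) ψ x))
    linarith
  simp only [hΦdef, inner_add_right, real_inner_smul_right]
  have h6 : 0 ≤ ψ x * Λ' (u x - v x) *
      inner ℝ (A x (u x) (Du x) - A x (v x) (Dv x)) (Du x - Dv x) :=
    mul_nonneg (mul_nonneg (hψa x).1 (hΛ'0 _)) hmono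
  have h7 := mul_le_mul_of_nonneg_left hin (hΛ01 (u x - v x)).1
  have h8 : Λ (u x - v x) * (α * γ * b x * ψ x) ≤
      Λ (u x - v x) * (b x * (f (u x) - f (v x)) * ψ x) := by
    refine mul_le_mul_of_nonneg_left (mul_le_mul_of_nonneg_right ?_ (hψa x).1) (hΛ01 _).1
    rw [mul_comm (α * γ)]
    exact mul_le_mul_of_nonneg_left hf2 (hbpos x).le
  rw [mul_sub]
  linarith

end Energy

section ScalarFunctions

lemma smoothTransition_hasDerivAt (s : ℝ) :
    HasDerivAt Real.smoothTransition (deriv Real.smoothTransition s) s :=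
  ((Real.smoothTransition.contDiff (n := 1)).differentiable (by simp) s).hasDerivAt

lemma continuous_deriv_smoothTransition : Continuous (deriv Real.smoothTransition) :=
  (Real.smoothTransition.contDiff (n := 1)).continuous_deriv le_rfl

lemma deriv_smoothTransition_nonneg (s : ℝ) : 0 ≤ deriv Real.smoothTransition s :=
  Real.smoothTransition.monotone.deriv_nonneg

lemma deriv_smoothTransition_of_nonpos {s : ℝ} (hs : s ≤ 0) :
    deriv Real.smoothTransition s = 0 := by
  refine IsLocalMin.deriv_eq_zero (Eventually.of_forall fun t => ?_)
  rw [Real.smoothTransition.zero_of_nonpos hs]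
  exact Real.smoothTransition.nonneg t

lemma deriv_smoothTransition_of_one_le {s : ℝ} (hs : 1 ≤ s) :
    deriv Real.smoothTransition s = 0 := by
  refine IsLocalMax.deriv_eq_zero (Eventually.of_forall fun t => ?_)
  rw [Real.smoothTransition.one_of_one_le hs]
  exact Real.smoothTransition.le_one t

lemma exists_deriv_smoothTransition_le :
    ∃ D : ℝ, 0 < D ∧ ∀ s, |deriv Real.smoothTransition s| ≤ D := by
  obtain ⟨C, hC⟩ := (isCompact_Icc (a := (0 : ℝ)) (b := 1)).exists_bound_of_continuousOn
    continuous_deriv_smoothTransition.continuousOn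
  refine ⟨max C 1, by positivity, fun s => ?_⟩
  rcases le_or_gt s 0 with h | h
  · rw [deriv_smoothTransition_of_nonpos h, abs_zero]; positivity
  rcases le_or_gt 1 s with h' | h'
  · rw [deriv_smoothTransition_of_one_le h', abs_zero]; positivity
  exact (hC s ⟨h.le, h'.le⟩).trans (le_max_left _ _)

/-- A primitive of `t ↦ t ^ (-μ)` on the positive half-line. -/
noncomputable def growthProfile (μ t : ℝ) : ℝ :=
  if μ = 1 then Real.log t else t ^ (1 - μ) / (1 - μ)

lemma hasDerivAt_growthProfile (μ : ℝ) {t : ℝ} (ht : 0 < t) :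
    HasDerivAt (growthProfile μ) (t ^ (-μ)) t := by
  unfold growthProfile
  by_cases h : μ = 1
  · simp only [h, if_true]
    rw [Real.rpow_neg_one]
    exact Real.hasDerivAt_log ht.ne'
  · simp only [h, if_false]
    have h1 : (1 - μ) ≠ 0 := sub_ne_zero.2 (Ne.symm h)
    have h2 := (Real.hasDerivAt_rpow_const (x := t) (p := 1 - μ) (Or.inl ht.ne')).div_const (1 - μ)
    have h3 : (1 - μ) * t ^ (1 - μ - 1) / (1 - μ) = t ^ (-μ) := by
      rw [mul_div_cancel_left₀ _ h1]
      congr 1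
      ring
    rwa [h3] at h2

lemma growthProfile_mono {μ : ℝ} {s t : ℝ} (hs : 0 < s) (hst : s ≤ t) :
    growthProfile μ s ≤ growthProfile μ t := by
  have hmono : MonotoneOn (growthProfile μ) (Ioi 0) := by
    refine monotoneOn_of_deriv_nonneg (convex_Ioi 0)
      (fun x hx => (hasDerivAt_growthProfile μ hx).continuousAt.continuousWithinAt) ?_ ?_
    · intro x hx
      rw [interior_Ioi] at hx
      exact (hasDerivAt_growthProfile μ hx).differentiableAt.differentiableWithinAt
    · intro x hx
      rw [interior_Ioi] at hx
      rw [(hasDerivAt_growthProfile μ hx).deriv]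
      exact Real.rpow_nonneg (le_of_lt hx) _
  exact hmono hs (hs.trans_le hst) hst

lemma rpow_neg_le_one {μ t : ℝ} (hμ : 0 ≤ μ) (ht : 1 ≤ t) : t ^ (-μ) ≤ 1 :=
  Real.rpow_le_one_of_one_le_of_nonpos ht (by linarith)

lemma growthProfile_add_one_le {μ : ℝ} (hμ : 0 ≤ μ) {R : ℝ} (hR : 1 ≤ R) :
    growthProfile μ (R + 1) ≤ growthProfile μ R + 1 := by
  obtain ⟨c, hc, hslope⟩ := exists_hasDerivAt_eq_slope (growthProfile μ) (fun t => t ^ (-μ))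
    (show R < R + 1 by linarith)
    (fun x hx => (hasDerivAt_growthProfile μ (by linarith [hx.1])).continuousAt.continuousWithinAt)
    (fun x hx => hasDerivAt_growthProfile μ (by linarith [hx.1]))
  have h1 := rpow_neg_le_one hμ (show 1 ≤ c by linarith [hc.1])
  rw [hslope] at h1
  simp only [add_sub_cancel_left, div_one] at h1
  linarith

/-- The radial cut-off function `e^{-θ L(t)} χ(R + 1 - t)`, where `L' = t ^ (-μ)`. -/
noncomputable def radialCutoff (μ θ R t : ℝ) : ℝ :=
  Real.exp (-θ * growthProfile μ t) * Real.smoothTransition (R + 1 - t)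

/-- The derivative of `radialCutoff`. -/
noncomputable def radialCutoffDeriv (μ θ R t : ℝ) : ℝ :=
  -(θ * t ^ (-μ)) * radialCutoff μ θ R t -
    Real.exp (-θ * growthProfile μ t) * deriv Real.smoothTransition (R + 1 - t)

lemma hasDerivAt_radialCutoff (μ θ R : ℝ) {t : ℝ} (ht : 0 < t) :
    HasDerivAt (radialCutoff μ θ R) (radialCutoffDeriv μ θ R t) t := by
  have h1 := ((hasDerivAt_growthProfile μ ht).const_mul (-θ)).exp
  have h2 : HasDerivAt (fun t => Real.smoothTransition (R + 1 - t))
      (deriv Real.smoothTransition (R + 1 - t) * (-1)) t :=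
    (smoothTransition_hasDerivAt (R + 1 - t)).comp t ((hasDerivAt_id t).const_sub (R + 1))
  refine (h1.mul h2).congr_deriv ?_
  simp only [radialCutoffDeriv, radialCutoff]
  ring

lemma contDiffAt_radialCutoff (μ θ R : ℝ) {t : ℝ} (ht : 0 < t) :
    ContDiffAt ℝ 1 (radialCutoff μ θ R) t := by
  have h1 : ContDiffAt ℝ 1 (growthProfile μ) t := by
    unfold growthProfile
    by_cases h : μ = 1
    · simp only [h, if_true]
      exact Real.contDiffAt_log.2 ht.ne'
    · simp only [h, if_false]
      exact (Real.contDiffAt_rpow_const_of_ne ht.ne').div_const _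
  have h2 : ContDiffAt ℝ 1 (fun t => Real.smoothTransition (R + 1 - t)) t :=
    (Real.smoothTransition.contDiff.comp (contDiff_const.sub contDiff_id)).contDiffAt
  exact (contDiffAt_const.mul h1).exp.mul h2

lemma radialCutoff_nonneg (μ θ R t : ℝ) : 0 ≤ radialCutoff μ θ R t :=
  mul_nonneg (Real.exp_pos _).le (Real.smoothTransition.nonneg _)

lemma radialCutoff_le_one {μ θ R t : ℝ} (hμ : μ ≤ 1) (hθ : 0 ≤ θ) (ht : 1 ≤ t) :
    radialCutoff μ θ R t ≤ 1 := by
  have h0 : 0 ≤ growthProfile μ t := by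
    unfold growthProfile
    split_ifs with h
    · exact Real.log_nonneg ht
    · exact div_nonneg (Real.rpow_nonneg (by linarith) _) (by linarith)
  refine mul_le_one₀ (Real.exp_le_one_iff.2 ?_) (Real.smoothTransition.nonneg _)
    (Real.smoothTransition.le_one _)
  nlinarith

lemma radialCutoff_eq_zero {μ θ R t : ℝ} (ht : R + 1 ≤ t) : radialCutoff μ θ R t = 0 := by
  rw [radialCutoff, Real.smoothTransition.zero_of_nonpos (by linarith), mul_zero]

lemma radialCutoff_of_le {μ θ R t : ℝ} (ht : t ≤ R) :
    radialCutoff μ θ R t = Real.exp (-θ * growthProfile μ t) := by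
  rw [radialCutoff, Real.smoothTransition.one_of_one_le (by linarith), mul_one]

lemma abs_radialCutoffDeriv_le {μ θ R t D : ℝ} (hθ : 0 ≤ θ)
    (hD : ∀ s, |deriv Real.smoothTransition s| ≤ D) (hR : 0 < R) (ht : 0 < t) :
    |radialCutoffDeriv μ θ R t| ≤ θ * t ^ (-μ) * radialCutoff μ θ R t +
      (if t < R + 1 then D * Real.exp (-θ * growthProfile μ R) else 0) := by
  have hD0 : 0 ≤ D := (abs_nonneg _).trans (hD 0)
  unfold radialCutoffDeriv
  refine (abs_sub _ _).trans (add_le_add ?_ ?_)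
  · rw [abs_mul, abs_neg, abs_of_nonneg (radialCutoff_nonneg _ _ _ _),
      abs_of_nonneg (mul_nonneg hθ (Real.rpow_nonneg ht.le _))]
  · split_ifs with h
    · rcases le_or_gt t R with h' | h'
      · rw [deriv_smoothTransition_of_one_le (by linarith), mul_zero, abs_zero]
        positivity
      · rw [abs_mul, abs_of_pos (Real.exp_pos _), mul_comm]
        refine mul_le_mul (hD _) (Real.exp_le_exp.2 ?_) (Real.exp_pos _).le hD0
        have := growthProfile_mono (μ := μ) hR h'.le
        nlinarith
    · rw [deriv_smoothTransition_of_nonpos (by linarith), mul_zero, abs_zero]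

end ScalarFunctions

section ConditionB

lemma ConditionB.exists_lower_bound {M : Type*} [MetricSpace M] {o : M}
    (hball : ∀ R, IsCompact (Metric.closedBall o R)) {μ β β' : ℝ} (hμ : 0 ≤ μ)
    (hβ' : 0 < β') (hββ' : β' < β) {b : M → ℝ} (hb : Continuous b) (hbpos : ∀ x, 0 < b x)
    (hbB : ConditionB o μ β b) :
    ∃ S : ℝ, 1 ≤ S ∧ ∀ x t, dist o x + S ≤ t → β' * t ^ (-μ) ≤ b x := by
  unfold ConditionB at hbB
  by_cases hμ0 : μ = 0
  · simp only [hμ0, if_true] at hbB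
    refine ⟨1, le_rfl, fun x t _ => ?_⟩
    rw [hμ0]
    simpa using hββ'.le.trans (hbB x)
  simp only [hμ0, if_false] at hbB
  have hμpos : 0 < μ := lt_of_le_of_ne hμ (Ne.symm hμ0)
  have hev : ∀ᶠ x in comap (fun x => dist o x) atTop, β' < dist o x ^ μ * b x := by
    have h1 := eventually_lt_of_lt_liminf
      (lt_of_lt_of_le (EReal.coe_lt_coe_iff.2 hββ') hbB)
    filter_upwards [h1] with x hx using EReal.coe_lt_coe_iff.1 hx
  rw [eventually_comap] at hev
  obtain ⟨R, hR⟩ := eventually_atTop.1 hev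
  obtain ⟨y, -, hy⟩ := (hball (max R 1)).exists_isMinOn
    ⟨o, Metric.mem_closedBall_self (by positivity)⟩ hb.continuousOn
  have hby := hbpos y
  refine ⟨max 1 ((β' / b y) ^ (μ⁻¹)), le_max_left _ _, fun x t ht => ?_⟩
  have ht1 : 1 ≤ t := by
    have := le_max_left 1 ((β' / b y) ^ (μ⁻¹))
    linarith [dist_nonneg (x := o) (y := x)]
  have htpos : 0 < t := by linarith
  rw [Real.rpow_neg htpos.le, ← div_eq_mul_inv, div_le_iff₀ (Real.rpow_pos_of_pos htpos _)]
  by_cases hx : dist o x ≤ max R 1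
  · have h1 : b y ≤ b x := hy (by rwa [Metric.mem_closedBall, dist_comm])
    have h2 : (β' / b y) ^ (μ⁻¹) ≤ t := by
      have := le_max_right 1 ((β' / b y) ^ (μ⁻¹))
      linarith [dist_nonneg (x := o) (y := x)]
    have h3 : β' / b y ≤ t ^ μ := by
      have := Real.rpow_le_rpow (by positivity) h2 hμ
      rwa [← Real.rpow_mul (by positivity), inv_mul_cancel₀ hμ0, Real.rpow_one] at this
    rw [div_le_iff₀ hby] at h3
    calc β' ≤ t ^ μ * b y := h3
      _ ≤ t ^ μ * b x := by gcongr
      _ = b x * t ^ μ := mul_comm _ _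
  · push Not at hx
    have h1 := hR (dist o x) ((le_max_left R 1).trans hx.le) x rfl
    have h2 : dist o x ^ μ ≤ t ^ μ := by
      refine Real.rpow_le_rpow dist_nonneg ?_ hμ
      have := le_max_left 1 ((β' / b y) ^ (μ⁻¹))
      linarith
    have h3 := mul_le_mul_of_nonneg_right h2 (hbpos x).le
    linarith

end ConditionB

section Growth

variable {m : ℕ} {M : Type*} [MetricSpace M] [ChartedSpace (Euc m) M]
  [IsManifold 𝓘(ℝ, Euc m) ∞ M] [RiemannianBundle (fun x : M => TangentSpace 𝓘(ℝ, Euc m) x)]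
  [SigmaCompactSpace M] [MeasurableSpace M]

/-- An exponential lower bound of the weighted volume of balls bounds the growth parameter. -/
lemma le_weightedGrowth {o : M} {μ θ c : ℝ} (hμ : μ ≤ 1) (hc : 0 < c) {w : M → ℝ} {Ω : Set M}
    (h : ∀ᶠ R in atTop, ENNReal.ofReal (c * Real.exp (θ * growthProfile μ R)) ≤
      ∫⁻ x in Metric.ball o R ∩ Ω, ENNReal.ofReal (w x) ∂(riemVolume m M)) :
    (θ : EReal) ≤ weightedGrowth m o μ w Ω := by
  have hlog : ∀ᶠ R in atTop, ((Real.log c + θ * growthProfile μ R : ℝ) : EReal) ≤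
      ENNReal.log (∫⁻ x in Metric.ball o R ∩ Ω, ENNReal.ofReal (w x) ∂(riemVolume m M)) := by
    filter_upwards [h] with R hR
    have hpos : 0 < c * Real.exp (θ * growthProfile μ R) := by positivity
    refine le_trans (le_of_eq ?_) (ENNReal.log_monotone hR)
    rw [ENNReal.log_ofReal, if_neg (not_le.2 hpos), Real.log_mul hc.ne' (Real.exp_pos _).ne',
      Real.log_exp]
  unfold weightedGrowth
  split_ifs with hμ1
  · have hlim : Tendsto (fun R : ℝ => (((Real.log c) / Real.log R + θ : ℝ) : EReal)) atTop
        (𝓝 (θ : EReal)) := by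
      refine (continuous_coe_real_ereal.tendsto θ).comp ?_
      have h1 := (Real.tendsto_log_atTop.const_div_atTop (Real.log c)).add_const θ
      simpa using h1
    rw [← hlim.liminf_eq]
    refine liminf_le_liminf ?_
    filter_upwards [hlog, eventually_gt_atTop 1] with R hR hR1
    have hlogR : 0 < Real.log R := Real.log_pos hR1
    refine le_trans (le_of_eq ?_)
      (EReal.div_le_div_right_of_nonneg (EReal.coe_nonneg.2 hlogR.le) hR)
    rw [← EReal.coe_div]
    congr 1
    simp only [growthProfile, hμ1, if_true]
    field_simp
  · have hμlt : 0 < 1 - μ := by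
      rcases lt_or_eq_of_le hμ with h' | h'
      · linarith
      · exact absurd h' hμ1
    have hlim : Tendsto (fun R : ℝ => (((1 - μ) * Real.log c / R ^ (1 - μ) + θ : ℝ) : EReal)) atTop
        (𝓝 (θ : EReal)) := by
      refine (continuous_coe_real_ereal.tendsto θ).comp ?_
      have h1 := ((tendsto_rpow_atTop hμlt).const_div_atTop ((1 - μ) * Real.log c)).add_const θ
      simpa using h1
    rw [← hlim.liminf_eq]
    refine liminf_le_liminf ?_
    filter_upwards [hlog, eventually_gt_atTop 1] with R hR hR1
    have hRpos : 0 < R ^ (1 - μ) := Real.rpow_pos_of_pos (by linarith) _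
    refine le_trans (le_of_eq ?_)
      (EReal.div_le_div_right_of_nonneg (EReal.coe_nonneg.2 hRpos.le)
        (mul_le_mul_of_nonneg_left hR (EReal.coe_nonneg.2 hμlt.le)))
    rw [← EReal.coe_mul, ← EReal.coe_div]
    congr 1
    simp only [growthProfile, hμ1, if_false]
    field_simp

end Growth

section Comparison

variable {m : ℕ} {M : Type*} [MetricSpace M] [ChartedSpace (Euc m) M]
  [IsManifold 𝓘(ℝ, Euc m) ∞ M] [RiemannianBundle (fun x : M => TangentSpace 𝓘(ℝ, Euc m) x)]
  [IsContMDiffRiemannianBundle 𝓘(ℝ, Euc m) ∞ (Euc m)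
      (fun x : M => TangentSpace 𝓘(ℝ, Euc m) x)]
  [IsRiemannianManifold 𝓘(ℝ, Euc m) M] [SigmaCompactSpace M] [CompleteSpace M]

variable (m) in
/-- If `K θ < a β`, the radial cut-offs of a smoothed distance function are subsolutions of
`a b ψ - K |∇ψ| ≥ 0` up to an error supported in a ball. -/
lemma exists_smooth_exhaustion (o : M) {μ β θ a K : ℝ} (hμ : μ ∈ Icc (0 : ℝ) 1) (hβ : 0 < β)
    (hθ : 0 ≤ θ) (ha : 0 < a) (hK : 0 < K) (hKa : K * θ < a * β) {b : M → ℝ} (hb : Continuous b)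
    (hbpos : ∀ x, 0 < b x) (hbB : ConditionB o μ β b) :
    ∃ (τ : M → ℝ) (κ C : ℝ), 0 < κ ∧ 0 < C ∧ Continuous τ ∧ (∀ x, dist o x + 1 ≤ τ x) ∧
      ∀ R, 0 < R → ContMDiff 𝓘(ℝ, Euc m) 𝓘(ℝ, ℝ) 1 (fun x => radialCutoff μ θ R (τ x)) ∧
        (∃ d, ∀ x, ‖riemGradient (m := m) (fun x => radialCutoff μ θ R (τ x)) x‖ ≤ d) ∧
        ∀ x, κ * τ x ^ (-μ) * radialCutoff μ θ R (τ x) -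
            (if τ x < R + 1 then C * Real.exp (-θ * growthProfile μ R) else 0) ≤
          a * b x * radialCutoff μ θ R (τ x) -
            K * ‖riemGradient (m := m) (fun x => radialCutoff μ θ R (τ x)) x‖ := by
  obtain ⟨β', hβ'l, hβ'⟩ : ∃ β', max (K * θ / a) 0 < β' ∧ β' < β :=
    exists_between (max_lt ((div_lt_iff₀ ha).2 (by linarith)) hβ)
  have hβ'0 : 0 < β' := (le_max_right _ _).trans_lt hβ'l
  have hKβ' : K * θ < a * β' := by
    have := (div_lt_iff₀ ha).1 ((le_max_left _ _).trans_lt hβ'l)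
    linarith
  obtain ⟨η, hη, hKη⟩ : ∃ η, 1 < η ∧ K * θ * η < a * β' := by
    have hev : ∀ᶠ η in 𝓝[>] (1 : ℝ), K * θ * η < a * β' := by
      refine nhdsWithin_le_nhds
        (((continuous_const.mul continuous_id).tendsto 1).eventually_lt_const ?_)
      simpa using hKβ'
    obtain ⟨η, h1, h2⟩ := (hev.and self_mem_nhdsWithin).exists
    exact ⟨η, h2, h1⟩
  obtain ⟨ρ, hρ, hρ'⟩ := exists_smooth_approx_of_lipschitz (m := m) (LipschitzWith.dist_right o) hη
  obtain ⟨S, hS, hSb⟩ := hbB.exists_lower_bound (isCompact_closedBall_of_complete m o) hμ.1 hβ'0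
    hβ' hb hbpos
  obtain ⟨D, hD0, hD⟩ := exists_deriv_smoothTransition_le
  have hτlow : ∀ x, dist o x + S ≤ ρ x + (1 + S) := fun x => by
    linarith [(abs_le.1 (hρ' x).1).1]
  have hτ1 : ∀ x, 1 ≤ ρ x + (1 + S) := fun x => by
    linarith [hτlow x, dist_nonneg (x := o) (y := x)]
  have hgrad : ∀ R x, ‖riemGradient (m := m) (fun x => radialCutoff μ θ R (ρ x + (1 + S))) x‖ ≤
      |radialCutoffDeriv μ θ R (ρ x + (1 + S))| * η := fun R x => by
    have hdiff : MDifferentiableAt 𝓘(ℝ, Euc m) 𝓘(ℝ, ℝ) ρ x :=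
      (hρ x).mdifferentiableAt (by simp)
    have hd := (hasDerivAt_radialCutoff μ θ R (t := ρ x + (1 + S))
      (by linarith [hτ1 x])).comp_add_const (ρ x) (1 + S)
    rw [riemGradient_comp (h := fun s => radialCutoff μ θ R (s + (1 + S))) hdiff hd, norm_smul,
      Real.norm_eq_abs]
    exact mul_le_mul_of_nonneg_left (hρ' x).2 (abs_nonneg _)
  refine ⟨fun x => ρ x + (1 + S), a * β' - K * θ * η, K * η * D, by linarith, by positivity,
    hρ.continuous.add continuous_const, fun x => by linarith [hτlow x], fun R hR => ⟨?_, ?_, ?_⟩⟩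
  · intro x
    have h1 : ContMDiffAt 𝓘(ℝ, Euc m) 𝓘(ℝ, ℝ) 1 (fun x => ρ x + (1 + S)) x :=
      ((hρ x).of_le (by simp)).add contMDiffAt_const
    exact (contDiffAt_radialCutoff μ θ R (t := ρ x + (1 + S))
      (by linarith [hτ1 x])).contMDiffAt.comp x h1
  · refine ⟨(θ * 1 * 1 + D * Real.exp (-θ * growthProfile μ R)) * η, fun x => ?_⟩
    refine (hgrad R x).trans (mul_le_mul_of_nonneg_right ?_ (by linarith))
    refine (abs_radialCutoffDeriv_le hθ hD hR (by linarith [hτ1 x])).trans (add_le_add ?_ ?_)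
    · have h1 := rpow_neg_le_one hμ.1 (hτ1 x)
      have h2 := radialCutoff_le_one (R := R) hμ.2 hθ (hτ1 x)
      have h3 := radialCutoff_nonneg μ θ R (ρ x + (1 + S))
      gcongr
    · split_ifs
      · exact le_rfl
      · positivity
  · intro x
    have h1 := hSb x _ (hτlow x)
    have h2 := (hgrad R x).trans (mul_le_mul_of_nonneg_right
      (abs_radialCutoffDeriv_le hθ hD hR (by linarith [hτ1 x])) (by linarith : (0 : ℝ) ≤ η))
    have h3 := mul_le_mul_of_nonneg_left h2 hK.le
    have h4 := mul_le_mul_of_nonneg_right (mul_le_mul_of_nonneg_left h1 ha.le)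
      (radialCutoff_nonneg μ θ R (ρ x + (1 + S)))
    simp only at *
    split_ifs at h3 ⊢ <;> nlinarith [h3, h4]

variable [MeasurableSpace M] [BorelSpace M]

/-- A subsolution which exceeds a supersolution by more than `γ` forces the weighted volume of
balls to grow at a rate determined by `γ`. -/
lemma exists_growth_lower_bound (o : M) {Ω : Set M} (hΩ : IsOpen Ω)
    {A : ∀ x : M, ℝ → Tan (m := m) x → Tan (m := m) x} {k : ℝ} (hk : 0 < k)
    (hA : IsCaratheodory Ω A) (hAk : IsWeaklyOneCoercive Ω A k) (hAmono : IsStrictlyMonotone Ω A)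
    {w : M → ℝ} (hw : IsWeight m Ω w) {μ β : ℝ} (hμ : μ ∈ Icc (0 : ℝ) 1) (hβ : 0 < β)
    {b : M → ℝ} (hb : Continuous b) (hbpos : ∀ x, 0 < b x) (hbB : ConditionB o μ β b)
    {f : ℝ → ℝ} (hf : Continuous f) {α : ℝ} (hα : 0 < α)
    (hfα : ∀ s t : ℝ, t < s → α * (s - t) ≤ f s - f t)
    {u v : M → ℝ} {Du Dv : ∀ x : M, Tan (m := m) x}
    (hu : HasWeakGradient Ω u Du) (huc : ContinuousOn u (closure Ω))
    (hv : HasWeakGradient Ω v Dv) (hvc : ContinuousOn v (closure Ω))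
    (hLu : WeakGE Ω w A u Du (fun x => b x * f (u x)))
    (hLv : WeakLE Ω w A v Dv (fun x => b x * f (v x)))
    {γ : ℝ} (hγ0 : 0 < γ) (hγ : ∀ y ∈ frontier Ω, u y - v y < γ)
    {x₀ : M} (hx₀ : x₀ ∈ Ω) (hγx₀ : γ < u x₀ - v x₀)
    (hfin : ∀ R, ∫⁻ x in Metric.ball o R ∩ Ω, ENNReal.ofReal (w x) ∂(riemVolume m M) ≠ ⊤)
    {θ : ℝ} (hθ : 0 ≤ θ) (hθγ : 2 * k * θ < α * γ * β) :
    ∃ c : ℝ, 0 < c ∧ ∀ᶠ R in atTop, ENNReal.ofReal (c * Real.exp (θ * growthProfile μ R)) ≤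
      ∫⁻ x in Metric.ball o R ∩ Ω, ENNReal.ofReal (w x) ∂(riemVolume m M) := by
  obtain ⟨τ, κ, C, hκ, hC, hτc, hτ, hcut⟩ := exists_smooth_exhaustion m o hμ hβ hθ
    (mul_pos hα hγ0) (by positivity : 0 < 2 * k) hθγ hb hbpos hbB
  obtain ⟨l, -, hl⟩ := exists_deriv_smoothTransition_le
  set ν := (riemVolume m M).restrict Ω with hν
  have hτ1 : ∀ x, 1 ≤ τ x := fun x => by linarith [hτ x, dist_nonneg (x := o) (y := x)]
  have hint : ∀ R, IntegrableOn w (Metric.ball o R) ν := fun R => by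
    rw [IntegrableOn, hν, Measure.restrict_restrict Metric.isOpen_ball.measurableSet]
    refine ⟨(hw.measurable.mono_measure
      (Measure.restrict_mono inter_subset_right le_rfl)).aestronglyMeasurable, ?_⟩
    rw [hasFiniteIntegral_iff_ofReal]
    · exact lt_top_iff_ne_top.2 (hfin R)
    · filter_upwards [ae_mono (Measure.restrict_mono inter_subset_right le_rfl) hw.pos] with x hx
        using hx.le
  set R₁ := τ x₀ + 1 with hR₁
  have hR₁1 : 1 ≤ R₁ := by linarith [hτ1 x₀]
  set V : Set M := Ω ∩ ((fun x => u x - v x) ⁻¹' Ioi γ ∩ τ ⁻¹' Iio R₁) with hV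
  have hVo : IsOpen V := by
    rw [hV, ← inter_assoc]
    refine IsOpen.inter ?_ (isOpen_Iio.preimage hτc)
    exact ((huc.sub hvc).mono subset_closure).isOpen_inter_preimage hΩ isOpen_Ioi
  have hVne : V.Nonempty := ⟨x₀, hx₀, hγx₀, by simp [hR₁]⟩
  set Λ : ℝ → ℝ := fun s => Real.smoothTransition (s - γ) with hΛ
  have hΛ01 : ∀ s, 0 ≤ Λ s ∧ Λ s ≤ 1 := fun s =>
    ⟨Real.smoothTransition.nonneg _, Real.smoothTransition.le_one _⟩
  have hVball : V ⊆ Metric.ball o R₁ := fun x hx => by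
    rw [Metric.mem_ball, dist_comm]
    linarith [hτ x, show τ x < R₁ from hx.2.2]
  have hmeasΛ : AEMeasurable (fun x => Λ (u x - v x)) ν :=
    (Real.smoothTransition.continuous.measurable.comp
      (measurable_id.sub_const γ)).comp_aemeasurable (hu.measurable.sub hv.measurable)
  have hIint : Integrable (fun x => w x * V.indicator (fun x => Λ (u x - v x)) x) ν := by
    refine integrable_weight_mul (K := Metric.ball o R₁) Metric.isOpen_ball.measurableSet
      hw.measurable (hint R₁) (hmeasΛ.indicator hVo.measurableSet) (C := 1) ?_ ?_
    · intro x _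
      by_cases hx : x ∈ V
      · rw [indicator_of_mem hx, abs_of_nonneg (hΛ01 _).1]; exact (hΛ01 _).2
      · rw [indicator_of_notMem hx]; simp
    · exact Eventually.of_forall fun x hx => indicator_of_notMem (fun h => hx (hVball h)) _
  set I := ∫ x, w x * V.indicator (fun x => Λ (u x - v x)) x ∂ν with hI
  have hIpos : 0 < I := by
    rw [hI, integral_pos_iff_support_of_nonneg_ae _ hIint]
    · have hsub : ∀ᵐ x ∂ν, x ∈ V → x ∈ Function.support
          (fun x => w x * V.indicator (fun x => Λ (u x - v x)) x) := by
        filter_upwards [hw.pos] with x hx hxV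
        have : 0 < Λ (u x - v x) :=
          Real.smoothTransition.pos_of_pos (sub_pos.2 hxV.2.1)
        rw [Function.mem_support, indicator_of_mem hxV]
        positivity
      refine lt_of_lt_of_le (b := ν V) ?_ (measure_mono_ae hsub)
      rw [hν, Measure.restrict_apply hVo.measurableSet, inter_eq_left.2 inter_subset_left]
      exact riemVolume_pos hVo hVne
    · filter_upwards [hw.pos] with x hx
      exact mul_nonneg hx.le (indicator_nonneg (fun x _ => (hΛ01 _).1) _)
  set q := R₁ ^ (-μ) * Real.exp (-θ * growthProfile μ R₁) with hq
  have hqpos : 0 < q := mul_pos (Real.rpow_pos_of_pos (by linarith) _) (Real.exp_pos _)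
  have hmain : ∀ R, R₁ ≤ R → κ * q * I ≤ C * Real.exp (-θ * growthProfile μ R) *
      ∫ x in Metric.ball o (R + 1), w x ∂ν := by
    intro R hR
    obtain ⟨hψ, ⟨d, hd⟩, hlow⟩ := hcut R (by linarith)
    obtain ⟨hEint, hE⟩ := energy_inequality hΩ hk hA hAk hAmono hw hb hbpos hf hα hfα hu huc hv hvc
      hLu hLv hγ0 hγ (Λ := Λ) (Λ' := fun s => deriv Real.smoothTransition (s - γ))
      (fun s => (smoothTransition_hasDerivAt (s - γ)).comp_sub_const s γ)
      (continuous_deriv_smoothTransition.comp (continuous_id.sub continuous_const))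
      (fun s => hl _) (fun s => deriv_smoothTransition_nonneg _)
      (fun s hs => Real.smoothTransition.zero_of_nonpos (by linarith))
      (fun s hs => deriv_smoothTransition_of_nonpos (by linarith)) hΛ01 hψ (a := 1)
      (fun x => ⟨radialCutoff_nonneg _ _ _ _, radialCutoff_le_one hμ.2 hθ (hτ1 x)⟩) hd
      (isCompact_closedBall_of_complete m o (R + 1))
      (fun x hx => radialCutoff_eq_zero (by
        rw [Metric.mem_closedBall, dist_comm, not_le] at hx
        linarith [hτ x]))
      (by
        have h1 := (hint (R + 2)).mono_set
          (Metric.closedBall_subset_ball (show R + 1 < R + 2 by linarith))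
        rwa [IntegrableOn, hν,
          Measure.restrict_restrict Metric.isClosed_closedBall.measurableSet] at h1)
    have hBint : Integrable ((Metric.ball o (R + 1)).indicator w) ν :=
      (integrable_indicator_iff Metric.isOpen_ball.measurableSet).2 (hint (R + 1))
    have hcomp : ∫ x, (κ * q * (w x * V.indicator (fun x => Λ (u x - v x)) x) -
        C * Real.exp (-θ * growthProfile μ R) * (Metric.ball o (R + 1)).indicator w x) ∂ν ≤ 0 := by
      refine le_trans (integral_mono_ae ((hIint.const_mul _).sub (hBint.const_mul _)) hEint ?_) hE
      filter_upwards [hw.pos] with x hx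
      obtain ⟨hΛ0, hΛ1⟩ := hΛ01 (u x - v x)
      have hrp : 0 < τ x ^ (-μ) := Real.rpow_pos_of_pos (by linarith [hτ1 x]) _
      have hE0 : 0 < C * Real.exp (-θ * growthProfile μ R) := by positivity
      have hA1 : κ * q * V.indicator (fun x => Λ (u x - v x)) x ≤
          Λ (u x - v x) * (κ * τ x ^ (-μ) * radialCutoff μ θ R (τ x)) := by
        by_cases hxV : x ∈ V
        · have hτR : τ x ≤ R₁ := le_of_lt hxV.2.2
          rw [indicator_of_mem hxV, radialCutoff_of_le (hτR.trans hR), mul_comm _ (Λ _), mul_assoc κ]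
          refine mul_le_mul_of_nonneg_left (mul_le_mul_of_nonneg_left ?_ hκ.le) hΛ0
          refine mul_le_mul ?_ (Real.exp_le_exp.2 ?_) (Real.exp_pos _).le hrp.le
          · exact Real.rpow_le_rpow_of_nonpos (by linarith [hτ1 x]) hτR (by linarith [hμ.1])
          · have := growthProfile_mono (μ := μ) (by linarith [hτ1 x]) hτR
            nlinarith
        · rw [indicator_of_notMem hxV, mul_zero]
          have := radialCutoff_nonneg μ θ R (τ x)
          positivity
      have hA2 : Λ (u x - v x) *
          (if τ x < R + 1 then C * Real.exp (-θ * growthProfile μ R) else 0) ≤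
          C * Real.exp (-θ * growthProfile μ R) *
            (Metric.ball o (R + 1)).indicator (fun _ => (1 : ℝ)) x := by
        split_ifs with h
        · have hxb : x ∈ Metric.ball o (R + 1) := by
            rw [Metric.mem_ball, dist_comm]; linarith [hτ x]
          rw [indicator_of_mem hxb, mul_one]
          exact mul_le_of_le_one_left hE0.le hΛ1
        · rw [mul_zero]
          exact mul_nonneg hE0.le (indicator_nonneg (fun _ _ => zero_le_one) _)
      have hA3 : (Metric.ball o (R + 1)).indicator w x =
          w x * (Metric.ball o (R + 1)).indicator (fun _ => (1 : ℝ)) x := by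
        by_cases h : x ∈ Metric.ball o (R + 1) <;> simp [h]
      have hA4 := mul_le_mul_of_nonneg_left (hlow x) hΛ0
      have hA5 := mul_le_mul_of_nonneg_left
        (show κ * q * V.indicator (fun x => Λ (u x - v x)) x -
          C * Real.exp (-θ * growthProfile μ R) *
            (Metric.ball o (R + 1)).indicator (fun _ => (1 : ℝ)) x ≤ Λ (u x - v x) *
              (α * γ * b x * radialCutoff μ θ R (τ x) -
                2 * k * ‖riemGradient (m := m) (fun x => radialCutoff μ θ R (τ x)) x‖) by
          rw [mul_sub] at hA4
          linarith) hx.le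
      rw [hA3]
      refine le_trans (le_of_eq ?_) hA5
      ring
    rw [integral_sub (hIint.const_mul _) (hBint.const_mul _), integral_const_mul,
      integral_const_mul, integral_indicator Metric.isOpen_ball.measurableSet] at hcomp
    linarith
  refine ⟨κ * q * I / C * Real.exp (-θ), by positivity, ?_⟩
  filter_upwards [eventually_ge_atTop (R₁ + 1)] with R hR
  have h1 := hmain (R - 1) (by linarith)
  rw [sub_add_cancel] at h1
  have h2 : ∫ x in Metric.ball o R, w x ∂ν =
      (∫⁻ x in Metric.ball o R ∩ Ω, ENNReal.ofReal (w x) ∂(riemVolume m M)).toReal := by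
    rw [hν, Measure.restrict_restrict Metric.isOpen_ball.measurableSet,
      integral_eq_lintegral_of_nonneg_ae]
    · filter_upwards [ae_mono (Measure.restrict_mono inter_subset_right le_rfl) hw.pos] with x hx
        using hx.le
    · exact (hw.measurable.mono_measure
        (Measure.restrict_mono inter_subset_right le_rfl)).aestronglyMeasurable
  refine ENNReal.ofReal_le_of_le_toReal ?_
  rw [← h2]
  have h3 := growthProfile_add_one_le hμ.1 (show 1 ≤ R - 1 by linarith)
  rw [sub_add_cancel] at h3
  have h4 : Real.exp (-θ) * Real.exp (θ * growthProfile μ R) ≤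
      Real.exp (θ * growthProfile μ (R - 1)) := by
    rw [← Real.exp_add]
    exact Real.exp_le_exp.2 (by nlinarith)
  have h5 : Real.exp (θ * growthProfile μ (R - 1)) *
      Real.exp (-θ * growthProfile μ (R - 1)) = 1 := by
    rw [← Real.exp_add]; simp
  set P := Real.exp (θ * growthProfile μ (R - 1))
  set N := Real.exp (-θ * growthProfile μ (R - 1))
  set J := ∫ x in Metric.ball o R, w x ∂ν
  calc κ * q * I / C * Real.exp (-θ) * Real.exp (θ * growthProfile μ R)
      = κ * q * I / C * (Real.exp (-θ) * Real.exp (θ * growthProfile μ R)) := by ring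
    _ ≤ κ * q * I / C * P := mul_le_mul_of_nonneg_left h4 (by positivity)
    _ ≤ C * N * J / C * P := by
        refine mul_le_mul_of_nonneg_right ?_ (Real.exp_pos _).le
        exact div_le_div_of_nonneg_right h1 hC.le
    _ = J * (P * N) := by field_simp
    _ = J := by rw [h5, mul_one]

end Comparison

section GrowthParameter

variable {m : ℕ} {M : Type*} [MetricSpace M] [ChartedSpace (Euc m) M]
  [IsManifold 𝓘(ℝ, Euc m) ∞ M] [RiemannianBundle (fun x : M => TangentSpace 𝓘(ℝ, Euc m) x)]
  [SigmaCompactSpace M] [MeasurableSpace M]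

lemma weightedGrowth_eq_top {o : M} {μ : ℝ} (hμ : μ ≤ 1) {w : M → ℝ} {Ω : Set M} {R₀ : ℝ}
    (h : ∫⁻ x in Metric.ball o R₀ ∩ Ω, ENNReal.ofReal (w x) ∂(riemVolume m M) = ⊤) :
    weightedGrowth m o μ w Ω = ⊤ := by
  refine EReal.eq_top_iff_forall_lt _ |>.2 fun θ => (EReal.coe_lt_coe_iff.2 (lt_add_one θ)).trans_le
    (le_weightedGrowth hμ one_pos ?_)
  filter_upwards [eventually_ge_atTop R₀] with R hR
  refine le_top.trans (h.symm.le.trans (lintegral_mono_set ?_))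
  exact inter_subset_inter_left _ (Metric.ball_subset_ball hR)

lemma weightedGrowth_nonneg [BorelSpace M] [IsContMDiffRiemannianBundle 𝓘(ℝ, Euc m) ∞ (Euc m)
      (fun x : M => TangentSpace 𝓘(ℝ, Euc m) x)] (o : M) {μ : ℝ} (hμ : μ ≤ 1) {w : M → ℝ}
    {Ω : Set M} (hΩ : IsOpen Ω) (hne : Ω.Nonempty) (hw : IsWeight m Ω w) :
    0 ≤ weightedGrowth m o μ w Ω := by
  obtain ⟨x₀, hx₀⟩ := hne
  set R₀ := dist x₀ o + 1 with hR₀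
  set W := ∫⁻ x in Metric.ball o R₀ ∩ Ω, ENNReal.ofReal (w x) ∂(riemVolume m M) with hW
  have hWpos : 0 < W := by
    have hle : (riemVolume m M).restrict (Metric.ball o R₀ ∩ Ω) ≤ (riemVolume m M).restrict Ω :=
      Measure.restrict_mono inter_subset_right le_rfl
    have hV : 0 < riemVolume m M (Metric.ball o R₀ ∩ Ω) :=
      riemVolume_pos (Metric.isOpen_ball.inter hΩ) ⟨x₀, by simp [hR₀], hx₀⟩
    refine pos_iff_ne_zero.2 fun h0 => hV.ne' ?_
    rw [hW, lintegral_eq_zero_iff' (hw.measurable.mono_measure hle).ennreal_ofReal] at h0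
    rw [← Measure.restrict_eq_zero, ← ae_eq_bot, ← eventually_false_iff_eq_bot]
    filter_upwards [ae_mono hle hw.pos, h0] with x hx hx0
    exact (ENNReal.ofReal_pos.2 hx).ne' hx0
  by_cases hWtop : W = ⊤
  · rw [weightedGrowth_eq_top hμ hWtop]
    exact le_top
  refine le_weightedGrowth (θ := 0) hμ (ENNReal.toReal_pos hWpos.ne' hWtop) ?_
  filter_upwards [eventually_ge_atTop R₀] with R hR
  rw [zero_mul, Real.exp_zero, mul_one, ENNReal.ofReal_toReal hWtop]
  exact lintegral_mono_set (inter_subset_inter_left _ (Metric.ball_subset_ball hR))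

end GrowthParameter

end WeakOneCoercive

theorem stmt19 {m : ℕ} (hm : 2 ≤ m)
    {M : Type*} [MetricSpace M] [ChartedSpace (WeakOneCoercive.Euc m) M]
    [IsManifold 𝓘(ℝ, WeakOneCoercive.Euc m) ∞ M]
    [RiemannianBundle (fun x : M => TangentSpace 𝓘(ℝ, WeakOneCoercive.Euc m) x)]
    [IsContMDiffRiemannianBundle 𝓘(ℝ, WeakOneCoercive.Euc m) ∞ (WeakOneCoercive.Euc m)
      (fun x : M => TangentSpace 𝓘(ℝ, WeakOneCoercive.Euc m) x)]
    [IsRiemannianManifold 𝓘(ℝ, WeakOneCoercive.Euc m) M]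
    [ConnectedSpace M] [SigmaCompactSpace M] [CompleteSpace M]
    [MeasurableSpace M] [BorelSpace M]
    (o : M) (Ω : Set M) (hΩ : IsOpen Ω)
    (A : ∀ x : M, ℝ → WeakOneCoercive.Tan (m := m) x → WeakOneCoercive.Tan (m := m) x)
    (k : ℝ) (hk : 0 < k)
    (hA : WeakOneCoercive.IsCaratheodory Ω A)
    (hAk : WeakOneCoercive.IsWeaklyOneCoercive Ω A k)
    (hAmono : WeakOneCoercive.IsStrictlyMonotone Ω A)
    (w : M → ℝ) (hw : WeakOneCoercive.IsWeight m Ω w)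
    (μ β : ℝ) (hμ : μ ∈ Set.Icc (0 : ℝ) 1) (hβ : 0 < β)
    (b : M → ℝ) (hb : Continuous b) (hbpos : ∀ x, 0 < b x)
    (hbB : WeakOneCoercive.ConditionB o μ β b)
    (f : ℝ → ℝ) (hf : ContDiff ℝ 1 f)
    (α : ℝ) (hα : 0 < α) (hfα : ∀ s t : ℝ, t < s → α * (s - t) ≤ f s - f t)
    (u v : M → ℝ) (Du Dv : ∀ x : M, WeakOneCoercive.Tan (m := m) x)
    (hu : WeakOneCoercive.HasWeakGradient Ω u Du) (huc : ContinuousOn u (closure Ω))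
    (hv : WeakOneCoercive.HasWeakGradient Ω v Dv) (hvc : ContinuousOn v (closure Ω))
    (hLu : WeakOneCoercive.WeakGE Ω w A u Du (fun x => b x * f (u x)))
    (hLv : WeakOneCoercive.WeakLE Ω w A v Dv (fun x => b x * f (v x))) :
    ∀ x ∈ Ω, (u x : EReal) ≤ (v x : EReal) +
      max (((2 * k / (α * β) : ℝ) : EReal) * WeakOneCoercive.weightedGrowth m o μ w Ω)
        (⨆ y ∈ frontier Ω, ((u y - v y : ℝ) : EReal)) := by
  intro x₀ hx₀
  have hαβ : 0 < α * β := mul_pos hα hβ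
  have hq : 0 < 2 * k / (α * β) := by positivity
  set c := WeakOneCoercive.weightedGrowth m o μ w Ω with hc
  have hc0 : 0 ≤ c := WeakOneCoercive.weightedGrowth_nonneg o hμ.2 hΩ ⟨x₀, hx₀⟩ hw
  by_contra hcon
  have hmax : max (((2 * k / (α * β) : ℝ) : EReal) * c)
      (⨆ y ∈ frontier Ω, ((u y - v y : ℝ) : EReal)) < ((u x₀ - v x₀ : ℝ) : EReal) := by
    by_contra hle
    refine hcon (le_trans (le_of_eq ?_) (add_le_add_right (not_lt.1 hle) (v x₀ : EReal)))
    rw [← EReal.coe_add, add_sub_cancel]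
  obtain ⟨z, hz, hzx₀⟩ := exists_between hmax
  have hXz := (le_max_left _ _).trans_lt hz
  have hYz := (le_max_right _ _).trans_lt hz
  have hctop : c ≠ ⊤ := fun h => by
    rw [h, EReal.coe_mul_top_of_pos hq] at hXz
    exact not_top_lt hXz
  have hX0 : 0 ≤ ((2 * k / (α * β) : ℝ) : EReal) * c := mul_nonneg (EReal.coe_nonneg.2 hq.le) hc0
  lift z to ℝ using ⟨hzx₀.ne_top, (hX0.trans_lt hXz).ne_bot⟩ with γ
  have hfin : ∀ R, ∫⁻ x in Metric.ball o R ∩ Ω, ENNReal.ofReal (w x)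
      ∂(WeakOneCoercive.riemVolume m M) ≠ ⊤ := fun R h =>
    hctop (WeakOneCoercive.weightedGrowth_eq_top hμ.2 h)
  have hc_coe : ((c.toReal : ℝ) : EReal) = c :=
    EReal.coe_toReal hctop (EReal.bot_lt_zero.trans_le hc0).ne'
  have hc'0 : 0 ≤ c.toReal := EReal.toReal_nonneg hc0
  have hγ0 : 0 < γ := EReal.coe_pos.1 (hX0.trans_lt hXz)
  rw [← hc_coe, ← EReal.coe_mul, EReal.coe_lt_coe_iff, div_mul_eq_mul_div, div_lt_iff₀ hαβ] at hXz
  obtain ⟨θ, hcθ, hθ⟩ : ∃ θ, c.toReal < θ ∧ θ < γ * (α * β) / (2 * k) :=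
    exists_between ((lt_div_iff₀ (by positivity)).2 (by linarith))
  rw [lt_div_iff₀ (by positivity)] at hθ
  obtain ⟨C, hC, hgrowth⟩ := WeakOneCoercive.exists_growth_lower_bound o hΩ hk hA hAk hAmono hw hμ hβ
    hb hbpos hbB hf.continuous hα hfα hu huc hv hvc hLu hLv hγ0
    (fun y hy => EReal.coe_lt_coe_iff.1 ((le_iSup₂ (f := fun y (_ : y ∈ frontier Ω) =>
      ((u y - v y : ℝ) : EReal)) y hy).trans_lt hYz))
    hx₀ (EReal.coe_lt_coe_iff.1 hzx₀) hfin (hc'0.trans hcθ.le) (by linarith)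
  have hle := WeakOneCoercive.le_weightedGrowth hμ.2 hC hgrowth
  rw [← hc, ← hc_coe, EReal.coe_le_coe_iff] at hle
  linarith
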